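/- arXiv:1105.1798 — 4 statements merged into one kernel-verified Lean document; each statement's English description precedes it below -/
import Mathlib

section
/- Let 1 < p < ∞. There exists a constant C > 0, depending only on p, such that for every N ∈ ℕ and every complex polynomial h(z) = ∑_{n=0}^d h_n zⁿ (of arbitrary degree d), the truncation S_N h(z) = ∑_{n=0}^{min(N,d)} h_n zⁿ satisfies ∫₀^{2π} |S_N h(e^{iθ})|^p dθ ≤ C ∫₀^{2π} |h(e^{iθ})|^p dθ. -/
/-!
Multiplying by `z ^ (-N - 1)` turns truncation into the projection onto negative frequencies: on
the unit circle `h = z ^ (N + 1) (F + conj W)` with polynomials `F`, `W`, `W(0) = 0`, and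
`S_N h = z ^ (N + 1) conj W`. So the claim is M. Riesz's inequality
`∫ |W| ^ p ≤ C ∫ |F + conj W| ^ p` (`exists_conj_bound`).

It follows from a pointwise inequality `|w| ^ p ≤ C |z + conj w| ^ p - κ⁻¹ u (z w)`
(`exists_pointwise`), where `u : ℂ → ℝ` is homogeneous of degree `p / 2`, negative near `-1`, and
satisfies `0 ≤ ∫ u (G (e ^ (iθ))) dθ` for polynomials `G` with `G(0) = 0`: take `G = F W` and
integrate. The pointwise inequality holds because `z w` is close to `-|w| ^ 2` exactly when
`z + conj w` is small compared with `w`.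

Such a `u` is found in `exists_subMean`. For `1 < τ < 2` the function
`potential τ ζ = ∫₀^∞ log |1 + x² ζ| x ^ (-τ - 1) dx` is homogeneous of degree `τ / 2`. Its mean
over the image of the circle under `G` is nonnegative by Jensen's inequality for the polynomial
`1 + x² G` (the Mahler measure bounds the constant coefficient) and Fubini. It is negative at `-1`:
the integral `∫₀^∞ log |1 - x²| x ^ (-2) dx` vanishes, and passing to the exponent `-τ - 1` gives
more weight to the region `x < √2`, where the logarithm is negative. With `τ = p / k` for a suitable
`k`, the function `u ζ = potential τ (± ζ ^ k)` has degree `p / 2`; this covers every `p > 1` except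
`p = 2`, for which `u = Re` works.
-/

open MeasureTheory Set Filter Topology Asymptotics

namespace RieszTruncation

/-! ### The sign of the integral of `x ^ (-τ - 1) log |1 - x²|` -/

lemma isBigO_atTop_aux (e : ℝ) (he : e = 1 ∨ e = -1) :
    (fun x : ℝ => Real.log (1 + e * x ^ 2)) =O[atTop] (fun x : ℝ => x ^ (-(-(1/2) : ℝ))) := by
  have h1 : (fun x : ℝ => Real.log x) =O[atTop] (fun x : ℝ => x ^ (1/2 : ℝ)) :=
    (isLittleO_log_rpow_atTop (by norm_num)).isBigO
  have h2 : (fun x : ℝ => Real.log (1 + e * x ^ 2)) =O[atTop] (fun x : ℝ => Real.log x) := by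
    refine IsBigO.of_bound 3 ?_
    filter_upwards [eventually_ge_atTop 2] with x hx
    have hl : 0 ≤ Real.log x := Real.log_nonneg (by linarith)
    rw [Real.norm_eq_abs, Real.norm_eq_abs, abs_of_nonneg hl, ← Real.log_abs]
    have h3 : (3 : ℝ) * Real.log x = Real.log (x ^ 3) := by simp
    have hb : 1 ≤ |1 + e * x ^ 2| ∧ |1 + e * x ^ 2| ≤ x ^ 3 := by
      rcases he with rfl | rfl
      · rw [abs_of_nonneg (by positivity)]
        constructor <;> nlinarith [sq_nonneg x]
      · rw [abs_of_nonpos (by nlinarith)]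
        constructor <;> nlinarith [sq_nonneg x]
    rw [abs_of_nonneg (Real.log_nonneg hb.1), h3]
    exact Real.log_le_log (by linarith [hb.1]) hb.2
  simpa using h2.trans h1

lemma isBigO_zero_aux (e : ℝ) :
    (fun x : ℝ => Real.log (1 + e * x ^ 2)) =O[𝓝[>] 0] (fun x : ℝ => x ^ (-(-2 : ℝ))) := by
  have h1 : HasDerivAt (fun y : ℝ => Real.log (1 + e * y)) (e / (1 + e * 0)) 0 := by
    have : HasDerivAt (fun y : ℝ => 1 + e * y) e 0 := by
      simpa using ((hasDerivAt_id (0:ℝ)).const_mul e).const_add 1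
    exact this.log (by simp)
  have h2 := h1.isBigO_sub
  have h3 : Tendsto (fun x : ℝ => x ^ 2) (𝓝[>] 0) (𝓝 0) := by
    have : Continuous (fun x : ℝ => x ^ 2) := by fun_prop
    simpa using this.continuousWithinAt (s := Ioi 0) (x := 0) |>.tendsto
  have h4 := h2.comp_tendsto h3
  simpa [Function.comp_def] using h4

lemma integrableOn_log_aux (e : ℝ) (he : e = 1 ∨ e = -1) {τ : ℝ} (h1 : 1 ≤ τ) (h2 : τ < 2) :
    IntegrableOn (fun x : ℝ => x ^ (-τ - 1) * Real.log (1 + e * x ^ 2)) (Ioi 0) := by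
  refine mellin_convergent_of_isBigO_scalar ?_ (isBigO_atTop_aux e he) (by linarith)
    (isBigO_zero_aux e) (by linarith)
  refine LocallyIntegrable.locallyIntegrableOn ?_ _
  rw [MeasureTheory.locallyIntegrable_iff]
  intro k hk
  obtain ⟨a, b, hab⟩ : ∃ a b, k ⊆ Icc a b := by
    obtain ⟨R, hR⟩ := hk.isBounded.subset_closedBall 0
    exact ⟨-R, R, by simpa [Real.closedBall_eq_Icc] using hR⟩
  rcases le_or_gt a b with h | h
  · have : IntervalIntegrable (Real.log ∘ (fun x : ℝ => 1 + e * x ^ 2)) volume a b := by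
      apply MeromorphicOn.intervalIntegrable_log
      intro x _
      fun_prop
    rw [intervalIntegrable_iff_integrableOn_Icc_of_le h] at this
    exact this.mono_set hab
  · rw [Icc_eq_empty (not_le.2 h)] at hab
    simp [subset_empty_iff.1 hab]

/-- An antiderivative of `x⁻² log |1 - x²|`, away from `0` and `1`. -/
noncomputable def logPrimitive (x : ℝ) : ℝ :=
  Real.log (1 - x) - Real.log (1 + x) - x⁻¹ * (Real.log (1 - x) + Real.log (1 + x))

lemma logPrimitive_hasDerivAt {x : ℝ} (h0 : 0 < x) (h1 : x ≠ 1) :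
    HasDerivAt logPrimitive (x ^ (-(1:ℝ) - 1) * Real.log (1 + (-1) * x ^ 2)) x := by
  have ha : HasDerivAt (fun x : ℝ => Real.log (1 - x)) (-1 / (1 - x)) x :=
    ((hasDerivAt_id x).const_sub 1).log (sub_ne_zero.2 h1.symm)
  have hb : HasDerivAt (fun x : ℝ => Real.log (1 + x)) (1 / (1 + x)) x :=
    ((hasDerivAt_id x).const_add 1).log (by positivity)
  have hc := (ha.sub hb).sub ((hasDerivAt_inv h0.ne').mul (ha.add hb))
  have hlog : Real.log (1 + (-1) * x ^ 2) = Real.log (1 - x) + Real.log (1 + x) := by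
    rw [← Real.log_mul (sub_ne_zero.2 h1.symm) (by positivity)]
    ring_nf
  have hpow : x ^ (-(1:ℝ) - 1) = (x ^ 2)⁻¹ := by
    rw [show (-(1:ℝ) - 1) = -((2:ℕ):ℝ) by norm_num, Real.rpow_neg h0.le, Real.rpow_natCast]
  rw [hlog, hpow]
  have h1' : 1 - x ≠ 0 := sub_ne_zero.2 h1.symm
  have h2' : 1 + x ≠ 0 := by positivity
  refine HasDerivAt.congr_deriv (f := logPrimitive) hc ?_
  simp only [Pi.add_apply]
  field_simp
  ring

lemma logPrimitive_continuousAt_one : ContinuousAt logPrimitive 1 := by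
  have h : logPrimitive =ᶠ[𝓝 1] fun x => -(x⁻¹ * ((1 - x) * Real.log (1 - x)))
      - Real.log (1 + x) - x⁻¹ * Real.log (1 + x) := by
    filter_upwards [eventually_gt_nhds zero_lt_one] with x hx
    unfold logPrimitive
    field_simp
    ring
  refine ContinuousAt.congr ?_ h.symm
  have h1 : ContinuousAt (fun x : ℝ => (1 - x) * Real.log (1 - x)) 1 :=
    (Real.continuous_mul_log.comp (continuous_const.sub continuous_id)).continuousAt
  have h2 : ContinuousAt (fun x : ℝ => Real.log (1 + x)) 1 :=
    ContinuousAt.log (by fun_prop) (by norm_num)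
  have h3 : ContinuousAt (fun x : ℝ => x⁻¹) 1 := continuousAt_inv₀ one_ne_zero
  exact ((h3.mul h1).neg.sub h2).sub (h3.mul h2)

lemma logPrimitive_tendsto_zero : Tendsto logPrimitive (𝓝[>] 0) (𝓝 0) := by
  have ha : HasDerivAt (fun x : ℝ => Real.log (1 - x)) (-1 / (1 - 0)) 0 :=
    ((hasDerivAt_id (0:ℝ)).const_sub 1).log (by norm_num)
  have hb : HasDerivAt (fun x : ℝ => Real.log (1 + x)) (1 / (1 + 0)) 0 :=
    ((hasDerivAt_id (0:ℝ)).const_add 1).log (by norm_num)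
  have hs := (ha.add hb).tendsto_slope_zero_right
  have hd := (ha.continuousAt.sub hb.continuousAt).tendsto.mono_left
    (nhdsWithin_le_nhds (s := Ioi 0))
  have := hd.sub hs
  change Tendsto (fun x : ℝ => Real.log (1 - x) - Real.log (1 + x)
    - x⁻¹ * (Real.log (1 - x) + Real.log (1 + x))) _ _
  simpa using this

lemma logPrimitive_tendsto_atTop : Tendsto logPrimitive atTop (𝓝 0) := by
  have key : ∀ c : ℝ, Tendsto (fun x => Real.log (x + c) - Real.log x) atTop (𝓝 0) := fun c =>
    Real.tendsto_log_comp_add_sub_log c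
  have h3 : Tendsto (fun x : ℝ => x⁻¹ * Real.log x) atTop (𝓝 0) := by
    have := (Real.isLittleO_log_id_atTop).tendsto_div_nhds_zero
    refine this.congr fun x => ?_
    simp [div_eq_inv_mul]
  have hi : Tendsto (fun x : ℝ => x⁻¹) atTop (𝓝 0) := tendsto_inv_atTop_zero
  have h4 := ((key (-1)).sub (key 1)).sub ((hi.mul ((key (-1)).add (key 1))).add (h3.const_mul 2))
  simp only [sub_zero, add_zero, mul_zero] at h4
  refine h4.congr fun x => ?_
  have : Real.log (1 - x) = Real.log (x + -1) := by rw [← Real.log_neg_eq_log]; ring_nf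
  rw [logPrimitive, this, add_comm 1 x]
  ring

/-- The integral in the borderline case `τ = 1`, where the integrand has an elementary primitive. -/
lemma integral_log_critical :
    ∫ x in Ioi (0:ℝ), x ^ (-(1:ℝ) - 1) * Real.log (1 + (-1) * x ^ 2) = 0 := by
  have hint := integrableOn_log_aux (-1) (Or.inr rfl) (le_refl 1) one_lt_two
  have h1 : IntegrableOn (fun x : ℝ => x ^ (-(1:ℝ) - 1) * Real.log (1 + (-1) * x ^ 2)) (Ioc 0 1) :=
    hint.mono_set Ioc_subset_Ioi_self
  have h2 : IntegrableOn (fun x : ℝ => x ^ (-(1:ℝ) - 1) * Real.log (1 + (-1) * x ^ 2)) (Ioi 1) :=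
    hint.mono_set (Ioi_subset_Ioi zero_le_one)
  rw [← Ioc_union_Ioi_eq_Ioi zero_le_one, setIntegral_union (Ioc_disjoint_Ioi le_rfl)
    measurableSet_Ioi h1 h2, ← intervalIntegral.integral_of_le zero_le_one,
    intervalIntegral.integral_eq_sub_of_hasDerivAt_of_tendsto zero_lt_one
      (fun x hx => logPrimitive_hasDerivAt hx.1 hx.2.ne)
      ((intervalIntegrable_iff_integrableOn_Ioc_of_le zero_le_one).2 h1)
      logPrimitive_tendsto_zero
      (logPrimitive_continuousAt_one.tendsto.mono_left nhdsWithin_le_nhds),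
    integral_Ioi_of_hasDerivAt_of_tendsto logPrimitive_continuousAt_one.continuousWithinAt
      (fun x hx => logPrimitive_hasDerivAt (zero_lt_one.trans hx) (ne_of_gt hx)) h2
      logPrimitive_tendsto_atTop]
  ring

/-- Obtained by comparing the weights `x ^ (-τ - 1)` and `x ^ (-2)`: their ratio decreases, and the
logarithm changes sign from negative to positive at `√2`. -/
lemma integral_log_neg {τ : ℝ} (h1 : 1 < τ) (h2 : τ < 2) :
    ∫ x in Ioi (0:ℝ), x ^ (-τ - 1) * Real.log (1 + (-1) * x ^ 2) < 0 := by
  set s : ℝ := √2 with hs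
  have hs0 : 0 < s := by positivity
  have hs2 : s ^ 2 = 2 := by simp [hs]
  have hf := integrableOn_log_aux (-1) (Or.inr rfl) h1.le h2
  have hg := (integrableOn_log_aux (-1) (Or.inr rfl) (le_refl 1) one_lt_two).const_mul
    (s ^ (1 - τ))
  have hpt : ∀ x : ℝ, 0 < x → x ^ (-τ - 1) * Real.log (1 + (-1) * x ^ 2)
      = x ^ (1 - τ) * (x ^ (-(1:ℝ) - 1) * Real.log (1 + (-1) * x ^ 2)) := by
    intro x hx
    rw [← mul_assoc, ← Real.rpow_add hx]
    ring_nf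
  -- Both `x ^ (1 - τ) - s ^ (1 - τ)` and `-log |1 - x²|` change sign exactly at `s = √2`.
  have hle : ∀ x : ℝ, 0 < x → 0 ≤ s ^ (1 - τ) * (x ^ (-(1:ℝ) - 1) * Real.log (1 + (-1) * x ^ 2))
      - x ^ (-τ - 1) * Real.log (1 + (-1) * x ^ 2) := by
    intro x hx
    have hp : 0 < x ^ (-(1:ℝ) - 1) := Real.rpow_pos_of_pos hx _
    rw [hpt x hx, ← sub_mul]
    rcases le_total x s with hxs | hxs
    · have ha : s ^ (1 - τ) ≤ x ^ (1 - τ) := Real.rpow_le_rpow_of_nonpos hx hxs (by linarith)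
      have hb : Real.log (1 + (-1) * x ^ 2) ≤ 0 := by
        rw [← Real.log_abs]
        refine Real.log_nonpos (abs_nonneg _) (abs_le.2 ?_)
        constructor <;> nlinarith
      exact mul_nonneg_of_nonpos_of_nonpos (by linarith)
        (mul_nonpos_of_nonneg_of_nonpos hp.le hb)
    · have ha : x ^ (1 - τ) ≤ s ^ (1 - τ) := Real.rpow_le_rpow_of_nonpos hs0 hxs (by linarith)
      have hb : 0 ≤ Real.log (1 + (-1) * x ^ 2) := by
        rw [← Real.log_abs]
        refine Real.log_nonneg (le_abs.2 (Or.inr ?_))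
        nlinarith
      exact mul_nonneg (by linarith) (mul_nonneg hp.le hb)
  have hpos : 0 < ∫ x in Ioi (0:ℝ), (s ^ (1 - τ) *
      (x ^ (-(1:ℝ) - 1) * Real.log (1 + (-1) * x ^ 2))
      - x ^ (-τ - 1) * Real.log (1 + (-1) * x ^ 2)) := by
    rw [setIntegral_pos_iff_support_of_nonneg_ae
      ((ae_restrict_iff' measurableSet_Ioi).2 (Eventually.of_forall fun x hx => hle x hx))
      (hg.sub hf)]
    refine lt_of_lt_of_le (b := volume (Ioi s)) (by simp) (measure_mono fun x hx => ?_)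
    have hx : s < x := hx
    have hx0 : 0 < x := hs0.trans hx
    refine ⟨?_, hx0⟩
    rw [Function.mem_support, hpt x hx0, ← sub_mul]
    have ha : x ^ (1 - τ) < s ^ (1 - τ) := Real.rpow_lt_rpow_of_neg hs0 hx (by linarith)
    have hb : 0 < Real.log (1 + (-1) * x ^ 2) := by
      rw [← Real.log_abs]
      refine Real.log_pos (lt_abs.2 (Or.inr ?_))
      nlinarith
    have hp : 0 < x ^ (-(1:ℝ) - 1) := Real.rpow_pos_of_pos hx0 _
    exact (mul_pos (by linarith) (mul_pos hp hb)).ne'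
  rw [integral_sub hg hf, integral_const_mul, integral_log_critical] at hpos
  linarith

/-! ### A homogeneous superposition of logarithms -/

/-- The weighted logarithm `x ^ (-τ - 1) log |1 + x² ζ|`; the square makes it homogeneous under
`ζ ↦ r² ζ`, `x ↦ x / r`. -/
noncomputable def kernel (τ : ℝ) (ζ : ℂ) (x : ℝ) : ℝ :=
  x ^ (-τ - 1) * Real.log ‖1 + (x : ℂ) ^ 2 * ζ‖

/-- The logarithmic potential `∫₀^∞ log |1 + x² ζ| x ^ (-τ - 1) dx`, a subharmonic function of `ζ`,
homogeneous of degree `τ / 2`. -/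
noncomputable def potential (τ : ℝ) (ζ : ℂ) : ℝ := ∫ x in Ioi (0:ℝ), kernel τ ζ x

/-- A bound for `|kernel τ ξ x|` valid for all `|ξ| = 1` simultaneously, when `x ≠ 1`. -/
noncomputable def majorant (τ x : ℝ) : ℝ :=
  |x ^ (-τ - 1) * Real.log (1 + (-1) * x ^ 2)| + |x ^ (-τ - 1) * Real.log (1 + 1 * x ^ 2)|

lemma majorant_nonneg (τ x : ℝ) : 0 ≤ majorant τ x := by unfold majorant; positivity

lemma integrableOn_majorant {τ : ℝ} (h1 : 1 ≤ τ) (h2 : τ < 2) :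
    IntegrableOn (majorant τ) (Ioi 0) :=
  (integrableOn_log_aux (-1) (Or.inr rfl) h1 h2).norm.add
    (integrableOn_log_aux 1 (Or.inl rfl) h1 h2).norm

lemma measurable_kernel_uncurry (τ : ℝ) : Measurable (fun q : ℂ × ℝ => kernel τ q.1 q.2) := by
  unfold kernel
  fun_prop

lemma measurable_kernel (τ : ℝ) (ζ : ℂ) : Measurable (kernel τ ζ) :=
  (measurable_kernel_uncurry τ).comp measurable_prodMk_left

lemma abs_kernel_le (τ : ℝ) {ξ : ℂ} (hξ : ‖ξ‖ = 1) {x : ℝ} (hx : 0 < x) (hx1 : x ≠ 1) :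
    |kernel τ ξ x| ≤ majorant τ x := by
  have hn : ‖(x : ℂ) ^ 2 * ξ‖ = x ^ 2 := by simp [hξ]
  have hlow : |1 + (-1) * x ^ 2| ≤ ‖1 + (x : ℂ) ^ 2 * ξ‖ := by
    have := abs_norm_sub_norm_le (1 : ℂ) (-((x : ℂ) ^ 2 * ξ))
    rw [norm_neg, hn, sub_neg_eq_add, norm_one] at this
    convert this using 2
    ring
  have hup : ‖1 + (x : ℂ) ^ 2 * ξ‖ ≤ 1 + 1 * x ^ 2 := by
    have := norm_add_le (1 : ℂ) ((x : ℂ) ^ 2 * ξ)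
    rw [hn, norm_one] at this
    linarith
  have hpos : 0 < |1 + (-1) * x ^ 2| := by
    refine abs_pos.2 fun h => hx1 ?_
    nlinarith
  have hl1 := Real.log_le_log hpos hlow
  have hl2 := Real.log_le_log (hpos.trans_le hlow) hup
  rw [Real.log_abs] at hl1
  unfold kernel majorant
  rw [abs_mul, abs_mul, abs_mul, ← mul_add]
  refine mul_le_mul_of_nonneg_left ?_ (abs_nonneg _)
  refine abs_le.2 ⟨?_, ?_⟩
  · linarith [neg_abs_le (Real.log (1 + (-1) * x ^ 2)), abs_nonneg (Real.log (1 + 1 * x ^ 2))]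
  · linarith [abs_nonneg (Real.log (1 + (-1) * x ^ 2)), le_abs_self (Real.log (1 + 1 * x ^ 2))]

lemma ae_abs_kernel_le (τ : ℝ) {ξ : ℂ} (hξ : ‖ξ‖ = 1) :
    ∀ᵐ x ∂(volume.restrict (Ioi (0:ℝ))), ‖kernel τ ξ x‖ ≤ majorant τ x := by
  rw [ae_restrict_iff' measurableSet_Ioi]
  filter_upwards [Measure.ae_ne volume (1:ℝ)] with x hx1 hx
  exact abs_kernel_le τ hξ hx hx1

lemma kernel_scale (τ : ℝ) (ξ : ℂ) {r x : ℝ} (hr : 0 < r) (hx : 0 < x) :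
    kernel τ ((r : ℂ) ^ 2 * ξ) x = r ^ (τ + 1) * kernel τ ξ (r * x) := by
  unfold kernel
  have h : r ^ (τ + 1) * r ^ (-τ - 1) = 1 := by
    rw [← Real.rpow_add hr, show τ + 1 + (-τ - 1) = 0 by ring, Real.rpow_zero]
  have h' : ((r * x : ℝ) : ℂ) ^ 2 * ξ = (x : ℂ) ^ 2 * ((r : ℂ) ^ 2 * ξ) := by
    push_cast
    ring
  rw [Real.mul_rpow hr.le hx.le, h']
  linear_combination (-(x ^ (-τ - 1) * Real.log ‖1 + (x : ℂ) ^ 2 * ((r : ℂ) ^ 2 * ξ)‖)) * h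

lemma exists_polar {ζ : ℂ} (hζ : ζ ≠ 0) :
    ∃ (r : ℝ) (ξ : ℂ), 0 < r ∧ ‖ξ‖ = 1 ∧ ζ = (r : ℂ) ^ 2 * ξ ∧ ∀ τ : ℝ, r ^ τ = ‖ζ‖ ^ (τ / 2) := by
  have h0 : 0 < ‖ζ‖ := norm_pos_iff.2 hζ
  have hsq : ((√‖ζ‖ : ℝ) : ℂ) ^ 2 = ‖ζ‖ := by
    rw [← Complex.ofReal_pow, Real.sq_sqrt h0.le]
  refine ⟨√‖ζ‖, ζ / ‖ζ‖, Real.sqrt_pos.2 h0, ?_, ?_, fun τ => ?_⟩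
  · simp [h0.ne']
  · rw [hsq, mul_div_cancel₀]
    exact_mod_cast h0.ne'
  · rw [Real.sqrt_eq_rpow, ← Real.rpow_mul h0.le]
    ring_nf

lemma potential_scale (τ : ℝ) (ξ : ℂ) {r : ℝ} (hr : 0 < r) :
    potential τ ((r : ℂ) ^ 2 * ξ) = r ^ τ * potential τ ξ := by
  unfold potential
  rw [setIntegral_congr_fun measurableSet_Ioi (fun x hx => kernel_scale τ ξ hr hx),
    integral_const_mul, integral_comp_mul_left_Ioi (kernel τ ξ) 0 hr, mul_zero, smul_eq_mul,
    ← mul_assoc, Real.rpow_add_one hr.ne', mul_assoc (r ^ τ), mul_inv_cancel₀ hr.ne', mul_one]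

lemma integrableOn_kernel {τ : ℝ} (h1 : 1 ≤ τ) (h2 : τ < 2) (ζ : ℂ) :
    IntegrableOn (kernel τ ζ) (Ioi 0) := by
  rcases eq_or_ne ζ 0 with rfl | hζ
  · have : kernel τ 0 = fun _ => 0 := by
      funext x
      simp [kernel]
    rw [this]
    exact integrableOn_zero
  obtain ⟨r, ξ, hr, hξ, rfl, -⟩ := exists_polar hζ
  have h : IntegrableOn (kernel τ ξ) (Ioi 0) :=
    (integrableOn_majorant h1 h2).mono' (measurable_kernel τ ξ).aestronglyMeasurable
      (ae_abs_kernel_le τ hξ)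
  have h' : IntegrableOn (fun x => kernel τ ξ (r * x)) (Ioi 0) := by
    rw [integrableOn_Ioi_comp_mul_left_iff _ _ hr, mul_zero]
    exact h
  exact IntegrableOn.congr_fun (h'.const_mul (r ^ (τ + 1)))
    (fun x hx => (kernel_scale τ ξ hr hx).symm) measurableSet_Ioi

lemma integral_abs_kernel_le {τ : ℝ} (h1 : 1 ≤ τ) (h2 : τ < 2) (ζ : ℂ) :
    ∫ x in Ioi (0:ℝ), ‖kernel τ ζ x‖ ≤ (∫ x in Ioi (0:ℝ), majorant τ x) * ‖ζ‖ ^ (τ / 2) := by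
  rcases eq_or_ne ζ 0 with rfl | hζ
  · simp [kernel, Real.zero_rpow (show τ / 2 ≠ 0 by positivity)]
  obtain ⟨r, ξ, hr, hξ, hζ', hn⟩ := exists_polar hζ
  have hle : ∫ x in Ioi (0:ℝ), ‖kernel τ ξ x‖ ≤ ∫ x in Ioi (0:ℝ), majorant τ x :=
    integral_mono_ae (integrableOn_kernel h1 h2 ξ).norm (integrableOn_majorant h1 h2)
      (ae_abs_kernel_le τ hξ)
  have heq : ∫ x in Ioi (0:ℝ), ‖kernel τ ζ x‖ = r ^ τ * ∫ x in Ioi (0:ℝ), ‖kernel τ ξ x‖ := by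
    have hp : ∀ x ∈ Ioi (0:ℝ), ‖kernel τ ζ x‖ = r ^ (τ + 1) * ‖kernel τ ξ (r * x)‖ := by
      intro x hx
      rw [hζ', kernel_scale τ ξ hr hx, norm_mul, Real.norm_of_nonneg (Real.rpow_nonneg hr.le _)]
    rw [setIntegral_congr_fun measurableSet_Ioi hp,
      integral_const_mul, integral_comp_mul_left_Ioi (fun x => ‖kernel τ ξ x‖) 0 hr, mul_zero,
      smul_eq_mul, ← mul_assoc, Real.rpow_add_one hr.ne', mul_assoc (r ^ τ),
      mul_inv_cancel₀ hr.ne', mul_one]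
  rw [heq, ← hn, mul_comm]
  exact mul_le_mul_of_nonneg_right hle (Real.rpow_nonneg hr.le _)

lemma abs_potential_le {τ : ℝ} (h1 : 1 ≤ τ) (h2 : τ < 2) (ζ : ℂ) :
    |potential τ ζ| ≤ (∫ x in Ioi (0:ℝ), majorant τ x) * ‖ζ‖ ^ (τ / 2) :=
  (norm_integral_le_integral_norm _).trans (integral_abs_kernel_le h1 h2 ζ)

lemma potential_neg_one {τ : ℝ} (h1 : 1 < τ) (h2 : τ < 2) : potential τ (-1) < 0 := by
  convert integral_log_neg h1 h2 using 1
  unfold potential kernel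
  refine integral_congr_ae (Eventually.of_forall fun x => ?_)
  have : (1 : ℂ) + (x : ℂ) ^ 2 * (-1) = ((1 + (-1) * x ^ 2 : ℝ) : ℂ) := by push_cast; ring
  simp only [this, Complex.norm_real, Real.norm_eq_abs, Real.log_abs]

/-- Continuity is proved along unit vectors, where `majorant` dominates uniformly, and transferred to
a neighbourhood by homogeneity. -/
lemma potential_continuousAt {τ : ℝ} (h1 : 1 ≤ τ) (h2 : τ < 2) :
    ContinuousAt (potential τ) (-1) := by
  have hne : ∀ᶠ ζ : ℂ in 𝓝 (-1), ζ ≠ 0 := isOpen_ne.mem_nhds (by simp)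
  have hc : ContinuousAt (fun ζ : ℂ => ζ / ‖ζ‖) (-1) := by
    refine ContinuousAt.div continuousAt_id (by fun_prop) (by simp)
  have hdir : ContinuousAt (fun ζ : ℂ => ∫ x in Ioi (0:ℝ), kernel τ (ζ / ‖ζ‖) x) (-1) := by
    refine continuousAt_of_dominated (bound := majorant τ)
      (Eventually.of_forall fun ζ => (measurable_kernel τ _).aestronglyMeasurable) ?_
      (integrableOn_majorant h1 h2) ?_
    · filter_upwards [hne] with ζ hζ
      exact ae_abs_kernel_le τ (by simp [hζ])
    · rw [ae_restrict_iff' measurableSet_Ioi]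
      filter_upwards [Measure.ae_ne volume (1:ℝ)] with x hx1 hx
      have hx : 0 < x := hx
      unfold kernel
      refine continuousAt_const.mul (ContinuousAt.log ?_ ?_)
      · exact (continuousAt_const.add (continuousAt_const.mul hc)).norm
      · have : (1 : ℂ) + (x : ℂ) ^ 2 * (-1 / (‖(-1 : ℂ)‖ : ℝ)) = ((1 - x ^ 2 : ℝ) : ℂ) := by
          simp [sub_eq_add_neg]
        rw [this, norm_ne_zero_iff, Complex.ofReal_ne_zero]
        intro h
        exact hx1 (by nlinarith)
  have hpow : ContinuousAt (fun ζ : ℂ => (√‖ζ‖) ^ τ) (-1) :=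
    ContinuousAt.rpow_const (by fun_prop) (Or.inl (by simp))
  refine (hpow.mul hdir).congr ?_
  filter_upwards [hne] with ζ hζ
  have h0 : 0 < ‖ζ‖ := norm_pos_iff.2 hζ
  have := potential_scale τ (ζ / ‖ζ‖) (Real.sqrt_pos.2 h0)
  rw [← Complex.ofReal_pow, Real.sq_sqrt h0.le, mul_div_cancel₀ _ (by exact_mod_cast h0.ne')]
    at this
  exact this.symm

/-- Jensen's inequality, in the form that the Mahler measure bounds the constant coefficient. -/
lemma integral_log_norm_eval_nonneg (H : Polynomial ℂ) (hH : H.coeff 0 = 1) :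
    0 ≤ ∫ θ in (0:ℝ)..(2 * Real.pi), Real.log ‖H.eval (Complex.exp (θ * Complex.I))‖ := by
  have h1 := Polynomial.norm_coeff_le_choose_mul_mahlerMeasure 0 H
  simp only [hH, norm_one, Nat.choose_zero_right, Nat.cast_one, one_mul] at h1
  have h2 : 0 ≤ H.logMahlerMeasure := by
    rw [Polynomial.logMahlerMeasure_eq_log_MahlerMeasure]
    exact Real.log_nonneg h1
  rw [Polynomial.logMahlerMeasure_def, Real.circleAverage_def, smul_eq_mul] at h2
  have h3 : 0 < (2 * Real.pi)⁻¹ := by positivity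
  have := nonneg_of_mul_nonneg_right h2 h3
  simpa [circleMap] using this

lemma potential_subMean {τ : ℝ} (h1 : 1 ≤ τ) (h2 : τ < 2) (G : Polynomial ℂ)
    (hG : G.coeff 0 = 0) :
    IntervalIntegrable (fun θ : ℝ => potential τ (G.eval (Complex.exp (θ * Complex.I)))) volume
      0 (2 * Real.pi) ∧
    0 ≤ ∫ θ in (0:ℝ)..(2 * Real.pi), potential τ (G.eval (Complex.exp (θ * Complex.I))) := by
  have hpi : (0:ℝ) ≤ 2 * Real.pi := by positivity
  have hcont : Continuous (fun θ : ℝ => G.eval (Complex.exp (θ * Complex.I))) := by fun_prop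
  set μ := volume.restrict (Ioc (0:ℝ) (2 * Real.pi)) with hμ
  set ν := volume.restrict (Ioi (0:ℝ)) with hν
  set f : ℝ × ℝ → ℝ := fun q => kernel τ (G.eval (Complex.exp (q.1 * Complex.I))) q.2 with hf
  have hfm : Measurable f :=
    (measurable_kernel_uncurry τ).comp ((hcont.measurable.comp measurable_fst).prodMk measurable_snd)
  have hfi : Integrable f (μ.prod ν) := by
    rw [integrable_prod_iff hfm.aestronglyMeasurable]
    refine ⟨Eventually.of_forall fun θ =>
      integrableOn_kernel h1 h2 (G.eval (Complex.exp (θ * Complex.I))), ?_⟩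
    have hb : Integrable (fun θ : ℝ => (∫ x in Ioi (0:ℝ), majorant τ x) *
        ‖G.eval (Complex.exp (θ * Complex.I))‖ ^ (τ / 2)) μ := by
      refine Continuous.integrableOn_Ioc ?_
      exact continuous_const.mul (hcont.norm.rpow_const fun _ => Or.inr (by positivity))
    have hm : AEStronglyMeasurable (fun θ : ℝ => ∫ x, ‖f (θ, x)‖ ∂ν) μ :=
      (hfm.norm.aestronglyMeasurable (μ := μ.prod ν)).integral_prod_right'
    refine hb.mono' hm (Eventually.of_forall fun θ => ?_)
    rw [Real.norm_of_nonneg (integral_nonneg fun _ => norm_nonneg _)]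
    exact integral_abs_kernel_le h1 h2 (G.eval (Complex.exp (θ * Complex.I)))
  have hpot : Integrable (fun θ : ℝ => ∫ x, f (θ, x) ∂ν) μ := hfi.integral_prod_left
  refine ⟨(intervalIntegrable_iff_integrableOn_Ioc_of_le hpi).2 hpot, ?_⟩
  rw [intervalIntegral.integral_of_le hpi]
  change 0 ≤ ∫ θ, ∫ x, f (θ, x) ∂ν ∂μ
  rw [integral_integral_swap hfi]
  refine integral_nonneg_of_ae ((ae_restrict_iff' measurableSet_Ioi).2
    (Eventually.of_forall fun x hx => ?_))
  have hx : 0 < x := hx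
  have := integral_log_norm_eval_nonneg (1 + Polynomial.C ((x : ℂ) ^ 2) * G) (by simp [hG])
  simp only [hf, kernel, Pi.zero_apply]
  rw [integral_const_mul]
  refine mul_nonneg (Real.rpow_nonneg hx.le _) ?_
  rw [intervalIntegral.integral_of_le hpi] at this
  simpa using this

/-! ### M. Riesz's inequality -/

/-- For every `p > 1` there is a function, homogeneous of degree `p / 2` and negative near `-1`, whose
mean along `G(e ^ (iθ))` is nonnegative for each polynomial `G` with `G(0) = 0`. -/
lemma exists_subMean {p : ℝ} (hp : 1 < p) :
    ∃ (u : ℂ → ℝ) (B κ : ℝ), 0 ≤ B ∧ 0 < κ ∧ (∀ ζ, |u ζ| ≤ B * ‖ζ‖ ^ (p / 2)) ∧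
      (∀ (r : ℝ) (ζ : ℂ), 0 < r → u ((r : ℂ) ^ 2 * ζ) = r ^ p * u ζ) ∧
      (∀ᶠ ζ in 𝓝 (-1 : ℂ), u ζ ≤ -κ) ∧
      ∀ G : Polynomial ℂ, G.coeff 0 = 0 →
        IntervalIntegrable (fun θ : ℝ => u (G.eval (Complex.exp (θ * Complex.I)))) volume
          0 (2 * Real.pi) ∧
        0 ≤ ∫ θ in (0:ℝ)..(2 * Real.pi), u (G.eval (Complex.exp (θ * Complex.I))) := by
  rcases eq_or_ne p 2 with rfl | hp2
  · refine ⟨Complex.re, 1, 1 / 2, zero_le_one, by norm_num, fun ζ => ?_, fun r ζ hr => ?_, ?_,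
      fun G hG => ⟨?_, ?_⟩⟩
    · simpa using Complex.abs_re_le_norm ζ
    · rw [← Complex.ofReal_pow, Complex.re_ofReal_mul]
      norm_num
    · have : Tendsto Complex.re (𝓝 (-1 : ℂ)) (𝓝 (-1)) := by
        simpa using Complex.continuous_re.tendsto (-1 : ℂ)
      exact this.eventually (Iic_mem_nhds (by norm_num))
    · exact Continuous.intervalIntegrable (by fun_prop) _ _
    · have hd : Differentiable ℂ (fun z => G.eval z) := G.differentiable
      have hm := DiffContOnCl.circleAverage (c := 0) (R := 1) hd.diffContOnCl
      rw [Real.circleAverage_def, ← Polynomial.coeff_zero_eq_eval_zero, hG, smul_eq_zero] at hm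
      have hm' : ∫ θ in (0:ℝ)..(2 * Real.pi), G.eval (Complex.exp (θ * Complex.I)) = 0 := by
        simpa [circleMap, Real.pi_ne_zero] using hm
      have hi : IntervalIntegrable (fun θ : ℝ => G.eval (Complex.exp (θ * Complex.I))) volume
          0 (2 * Real.pi) := Continuous.intervalIntegrable (by fun_prop) _ _
      have := Complex.reCLM.intervalIntegral_comp_comm hi
      rw [hm'] at this
      simpa using this.ge
  · -- The choice `k = ⌊p / 2⌋ + 1` puts `p / k` strictly between `1` and `2`, as `p ≠ 2`.
    obtain ⟨k, hk0, hk1, hk2⟩ : ∃ k : ℕ, 0 < k ∧ (k : ℝ) < p ∧ p < 2 * k := by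
      refine ⟨⌊p / 2⌋₊ + 1, by omega, ?_, ?_⟩
      · push_cast
        have hfl := Nat.floor_le (show 0 ≤ p / 2 by linarith)
        rcases lt_or_gt_of_ne hp2 with h | h
        · rw [Nat.floor_eq_zero.2 (by linarith)]
          simpa using hp
        · linarith
      · push_cast
        linarith [Nat.lt_floor_add_one (p / 2)]
    have hkpos : (0:ℝ) < k := by exact_mod_cast hk0
    set τ : ℝ := p / k with hτ
    have hτk : k * τ = p := by rw [hτ]; field_simp
    have h1 : 1 < τ := by rw [hτ, lt_div_iff₀ hkpos]; linarith
    have h2 : τ < 2 := by rw [hτ, div_lt_iff₀ hkpos]; linarith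
    have hneg := potential_neg_one h1 h2
    refine ⟨fun ζ => potential τ ((-1) ^ (k + 1) * ζ ^ k), ∫ x in Ioi (0:ℝ), majorant τ x,
      -potential τ (-1) / 2, integral_nonneg fun x => majorant_nonneg τ x, by linarith,
      fun ζ => ?_, fun r ζ hr => ?_, ?_, fun G hG => ?_⟩
    · refine (abs_potential_le h1.le h2 _).trans (le_of_eq ?_)
      congr 1
      rw [norm_mul, norm_pow, norm_neg, norm_one, one_pow, one_mul, norm_pow,
        ← Real.rpow_natCast, ← Real.rpow_mul (norm_nonneg _), ← hτk]
      ring_nf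
    · have : (-1 : ℂ) ^ (k + 1) * ((r : ℂ) ^ 2 * ζ) ^ k
          = ((r ^ k : ℝ) : ℂ) ^ 2 * ((-1) ^ (k + 1) * ζ ^ k) := by
        push_cast
        ring
      simp only [this]
      rw [potential_scale τ _ (pow_pos hr k), ← Real.rpow_natCast, ← Real.rpow_mul hr.le, hτk]
    · -- The sign `(-1) ^ (k + 1)` is chosen so that `ζ = -1` is sent to `-1`.
      have he : (-1 : ℂ) ^ (k + 1) * (-1) ^ k = -1 := by
        rw [← pow_add, show k + 1 + k = 2 * k + 1 by ring]
        simp [pow_succ, pow_mul]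
      have hc : Tendsto (fun ζ : ℂ => (-1 : ℂ) ^ (k + 1) * ζ ^ k) (𝓝 (-1)) (𝓝 (-1)) := by
        have : Continuous (fun ζ : ℂ => (-1 : ℂ) ^ (k + 1) * ζ ^ k) := by fun_prop
        simpa [he] using this.tendsto (-1)
      exact ((potential_continuousAt h1.le h2).tendsto.comp hc).eventually
        (Iic_mem_nhds (by linarith))
    · have := potential_subMean h1.le h2 (Polynomial.C ((-1) ^ (k + 1)) * G ^ k)
        (by simp [Polynomial.coeff_zero_eq_eval_zero] at hG ⊢; simp [hG, hk0.ne'])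
      simpa using this

lemma exists_pointwise {p : ℝ} (hp : 1 < p) {u : ℂ → ℝ} {B κ : ℝ} (hB : 0 ≤ B) (hκ : 0 < κ)
    (hbound : ∀ ζ, |u ζ| ≤ B * ‖ζ‖ ^ (p / 2))
    (hscale : ∀ (r : ℝ) (ζ : ℂ), 0 < r → u ((r : ℂ) ^ 2 * ζ) = r ^ p * u ζ)
    (hneg : ∀ᶠ ζ in 𝓝 (-1 : ℂ), u ζ ≤ -κ) :
    ∃ C : ℝ, 0 < C ∧ ∀ z w : ℂ,
      ‖w‖ ^ p ≤ C * ‖z + (starRingEnd ℂ) w‖ ^ p - κ⁻¹ * u (z * w) := by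
  obtain ⟨δ, hδ, hnear⟩ := Metric.eventually_nhds_iff.1 hneg
  have hD : 0 < 1 + δ⁻¹ := by positivity
  refine ⟨(1 + κ⁻¹ * B) * (1 + δ⁻¹) ^ p, by positivity, fun z w => ?_⟩
  set t := ‖z + (starRingEnd ℂ) w‖ with ht
  have ht0 : 0 ≤ t := norm_nonneg _
  rcases le_or_gt (δ * ‖w‖) t with h | h
  · -- Here `|z|` and `|w|` are both at most a multiple of `t`, and size bounds suffice.
    have hw : ‖w‖ ≤ (1 + δ⁻¹) * t := by
      have : ‖w‖ ≤ δ⁻¹ * t := by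
        rw [inv_mul_eq_div, le_div_iff₀ hδ]
        linarith
      linarith
    have hz : ‖z‖ ≤ (1 + δ⁻¹) * t := by
      have h1 : ‖z‖ ≤ t + ‖w‖ := by
        have := norm_sub_le (z + (starRingEnd ℂ) w) ((starRingEnd ℂ) w)
        simpa using this
      have : ‖w‖ ≤ δ⁻¹ * t := by
        rw [inv_mul_eq_div, le_div_iff₀ hδ]
        linarith
      linarith
    have hDt : 0 ≤ (1 + δ⁻¹) * t := by positivity
    have hwp : ‖w‖ ^ p ≤ ((1 + δ⁻¹) * t) ^ p :=
      Real.rpow_le_rpow (norm_nonneg _) hw (by linarith)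
    have hzw : ‖z * w‖ ^ (p / 2) ≤ ((1 + δ⁻¹) * t) ^ p := by
      have h1 : ‖z * w‖ ≤ ((1 + δ⁻¹) * t) ^ (2 : ℝ) := by
        rw [norm_mul, Real.rpow_two, sq]
        exact mul_le_mul hz hw (norm_nonneg _) hDt
      refine (Real.rpow_le_rpow (norm_nonneg _) h1 (by linarith)).trans (le_of_eq ?_)
      rw [← Real.rpow_mul hDt]
      ring_nf
    have hu' : u (z * w) ≤ B * ((1 + δ⁻¹) * t) ^ p :=
      (le_abs_self _).trans ((hbound _).trans (mul_le_mul_of_nonneg_left hzw hB))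
    have hu2 := mul_le_mul_of_nonneg_left hu' (inv_pos.2 hκ).le
    rw [mul_assoc, ← Real.mul_rpow hD.le ht0]
    linarith
  · -- Here `z w / |w| ^ 2` lies within `δ` of `-1`, so `u (z w) ≤ -κ |w| ^ p`.
    have hw : 0 < ‖w‖ := by
      by_contra hcon
      have : ‖w‖ = 0 := le_antisymm (not_lt.1 hcon) (norm_nonneg _)
      rw [this, mul_zero] at h
      linarith
    have hwC : (‖w‖ : ℂ) ≠ 0 := by exact_mod_cast hw.ne'
    have heq : z * w = (‖w‖ : ℂ) ^ 2 * (z * w / (‖w‖ : ℂ) ^ 2) := by field_simp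
    have hdist : dist (z * w / (‖w‖ : ℂ) ^ 2) (-1) < δ := by
      have h1 : z * w / (‖w‖ : ℂ) ^ 2 - (-1) = (z + (starRingEnd ℂ) w) * w / (‖w‖ : ℂ) ^ 2 := by
        rw [add_mul, Complex.conj_mul']
        field_simp
        ring
      rw [dist_eq_norm, h1, norm_div, norm_mul, norm_pow, Complex.norm_real, norm_norm, ← ht,
        div_lt_iff₀ (by positivity)]
      nlinarith
    have hu : u (z * w) ≤ ‖w‖ ^ p * (-κ) := by
      rw [heq, hscale _ _ hw]
      exact mul_le_mul_of_nonneg_left (hnear hdist) (Real.rpow_nonneg hw.le _)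
    have hu2 := mul_le_mul_of_nonneg_left hu (inv_pos.2 hκ).le
    have h3 : κ⁻¹ * (‖w‖ ^ p * (-κ)) = -‖w‖ ^ p := by field_simp
    have h4 : 0 ≤ (1 + κ⁻¹ * B) * (1 + δ⁻¹) ^ p * t ^ p := by positivity
    linarith

/-- M. Riesz's inequality: the antianalytic part `conj W` of `F + conj W` is controlled in `L^p`. -/
theorem exists_conj_bound {p : ℝ} (hp : 1 < p) :
    ∃ C : ℝ, 0 < C ∧ ∀ F W : Polynomial ℂ, W.coeff 0 = 0 →
      (∫ θ in (0:ℝ)..(2 * Real.pi), ‖W.eval (Complex.exp (θ * Complex.I))‖ ^ p)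
        ≤ C * ∫ θ in (0:ℝ)..(2 * Real.pi), ‖F.eval (Complex.exp (θ * Complex.I))
          + (starRingEnd ℂ) (W.eval (Complex.exp (θ * Complex.I)))‖ ^ p := by
  obtain ⟨u, B, κ, hB, hκ, hbound, hscale, hneg, hmean⟩ := exists_subMean hp
  obtain ⟨C, hC, hpt⟩ := exists_pointwise hp hB hκ hbound hscale hneg
  refine ⟨C, hC, fun F W hW => ?_⟩
  obtain ⟨hi, hnn⟩ := hmean (F * W) (by simp [Polynomial.mul_coeff_zero, hW])
  have hp0 : 0 ≤ p := by linarith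
  have hcF : Continuous (fun θ : ℝ => F.eval (Complex.exp (θ * Complex.I))) := by fun_prop
  have hcW : Continuous (fun θ : ℝ => W.eval (Complex.exp (θ * Complex.I))) := by fun_prop
  have hi1 : IntervalIntegrable (fun θ : ℝ => ‖W.eval (Complex.exp (θ * Complex.I))‖ ^ p) volume
      0 (2 * Real.pi) :=
    (hcW.norm.rpow_const fun _ => Or.inr hp0).intervalIntegrable _ _
  have hi2 : IntervalIntegrable (fun θ : ℝ => C * ‖F.eval (Complex.exp (θ * Complex.I))
      + (starRingEnd ℂ) (W.eval (Complex.exp (θ * Complex.I)))‖ ^ p) volume 0 (2 * Real.pi) :=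
    (continuous_const.mul ((hcF.add (Complex.continuous_conj.comp hcW)).norm.rpow_const
      fun _ => Or.inr hp0)).intervalIntegrable _ _
  have hi3 := hi.const_mul κ⁻¹
  have hmono := intervalIntegral.integral_mono_on (by positivity : (0:ℝ) ≤ 2 * Real.pi) hi1
    (hi2.sub hi3) (fun θ _ => by
      simpa using hpt (F.eval (Complex.exp (θ * Complex.I))) (W.eval (Complex.exp (θ * Complex.I))))
  rw [intervalIntegral.integral_sub hi2 hi3, intervalIntegral.integral_const_mul,
    intervalIntegral.integral_const_mul] at hmono
  have := mul_nonneg (inv_pos.2 hκ).le hnn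
  linarith

end RieszTruncation

/-- For `1 < p < ∞` there is `C > 0` (depending only on `p`) such that for every
`N` and every complex polynomial `h`, the truncation `S_N h` keeping coefficients of index at
most `N` satisfies `∫₀^{2π} |S_N h(e^{iθ})|^p dθ ≤ C ∫₀^{2π} |h(e^{iθ})|^p dθ`. -/
theorem stmt6 (p : ℝ) (hp : 1 < p) :
    ∃ C : ℝ, 0 < C ∧ ∀ (N : ℕ) (h : Polynomial ℂ),
      (∫ θ in (0:ℝ)..(2 * Real.pi),
          ‖∑ n ∈ Finset.range (N + 1), h.coeff n * Complex.exp (θ * Complex.I) ^ n‖ ^ p)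
        ≤ C * ∫ θ in (0:ℝ)..(2 * Real.pi), ‖h.eval (Complex.exp (θ * Complex.I))‖ ^ p := by
  obtain ⟨C, hC, hmain⟩ := RieszTruncation.exists_conj_bound hp
  refine ⟨C, hC, fun N h => ?_⟩
  set W : Polynomial ℂ := ∑ n ∈ Finset.range (N + 1),
    Polynomial.monomial (N + 1 - n) ((starRingEnd ℂ) (h.coeff n)) with hW
  set F : Polynomial ℂ := ∑ n ∈ Finset.range (h.natDegree + 1),
    Polynomial.monomial n (h.coeff (N + 1 + n)) with hF
  have hW0 : W.coeff 0 = 0 := by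
    rw [hW, Polynomial.finsetSum_coeff]
    refine Finset.sum_eq_zero fun n hn => ?_
    have := Finset.mem_range.1 hn
    rw [Polynomial.coeff_monomial, if_neg (by omega)]
  have key := hmain F W hW0
  have hnorm : ∀ θ : ℝ, ‖Complex.exp (θ * Complex.I)‖ = 1 := Complex.norm_exp_ofReal_mul_I
  have hWe : ∀ θ : ℝ, (starRingEnd ℂ) (W.eval (Complex.exp (θ * Complex.I)))
      * Complex.exp (θ * Complex.I) ^ (N + 1)
      = ∑ n ∈ Finset.range (N + 1), h.coeff n * Complex.exp (θ * Complex.I) ^ n := by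
    intro θ
    set e := Complex.exp (θ * Complex.I) with he
    have hee : (starRingEnd ℂ) e * e = 1 := by
      rw [Complex.conj_mul', hnorm]
      simp
    rw [hW, Polynomial.eval_finsetSum, map_sum, Finset.sum_mul]
    refine Finset.sum_congr rfl fun n hn => ?_
    have hn' : n < N + 1 := Finset.mem_range.1 hn
    rw [Polynomial.eval_monomial, map_mul, Complex.conj_conj, map_pow]
    calc h.coeff n * (starRingEnd ℂ) e ^ (N + 1 - n) * e ^ (N + 1)
        = h.coeff n * (starRingEnd ℂ) e ^ (N + 1 - n) * (e ^ (N + 1 - n) * e ^ n) := by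
          rw [← pow_add, Nat.sub_add_cancel hn'.le]
      _ = h.coeff n * ((starRingEnd ℂ) e * e) ^ (N + 1 - n) * e ^ n := by
          rw [mul_pow]
          ring
      _ = h.coeff n * e ^ n := by rw [hee, one_pow, mul_one]
  have hL : ∀ θ : ℝ, ‖∑ n ∈ Finset.range (N + 1), h.coeff n * Complex.exp (θ * Complex.I) ^ n‖
      = ‖W.eval (Complex.exp (θ * Complex.I))‖ := by
    intro θ
    rw [← hWe, norm_mul, norm_pow, hnorm, one_pow, mul_one, Complex.norm_conj]
  have hR : ∀ θ : ℝ, ‖h.eval (Complex.exp (θ * Complex.I))‖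
      = ‖F.eval (Complex.exp (θ * Complex.I))
          + (starRingEnd ℂ) (W.eval (Complex.exp (θ * Complex.I)))‖ := by
    intro θ
    have : h.eval (Complex.exp (θ * Complex.I))
        = (F.eval (Complex.exp (θ * Complex.I))
          + (starRingEnd ℂ) (W.eval (Complex.exp (θ * Complex.I))))
          * Complex.exp (θ * Complex.I) ^ (N + 1) := by
      rw [add_mul, hWe, Polynomial.eval_eq_sum_range'
        (show h.natDegree < N + 1 + (h.natDegree + 1) by omega), Finset.sum_range_add, add_comm,
        hF, Polynomial.eval_finsetSum, Finset.sum_mul]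
      congr 1
      refine Finset.sum_congr rfl fun n _ => ?_
      rw [Polynomial.eval_monomial, pow_add]
      ring
    rw [this, norm_mul, norm_pow, hnorm, one_pow, mul_one]
  simp only [hL, hR]
  exact key
end

section
/- Let α > −1 and let M : [0,1] → ℝ be twice continuously differentiable with M(r) > 0 for all r ∈ [0,1] and M(1) = 1. For n ∈ ℕ define a_n = (∫₀¹ r^{2n+1}(1−r²)^α dr)^{−1} and b_n = (∫₀¹ r^{2n+1} M(r)(1−r²)^α dr)^{−1}. Then there exists a constant C > 0 such that for all n ≥ 1, |b_n/a_n − b_{n−1}/a_{n−1}| ≤ C/n². -/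
/-!
Write `A n = ∫ r^(2n+1) (1-r²)^α` and `B n = ∫ r^(2n+1) M(r) (1-r²)^α`, so that
`b n / a n = A n / B n`. The boundary terms vanish when the derivative of
`r^(2n+2) (1-r²)^(α+1)` is integrated, which gives `(n + α + 2) A (n+1) = (n + 1) A n`
(`bergmanMoment_succ`). Taylor's formula at `r = 1` gives
`M(r) = 1 + c (1-r²) + O((1-r²)²)` (`exists_taylor_one_sub_sq`). Integrating term by term and
using the recursion,
`B n / A n = 1 + c (α+1) / (n+α+2) + O(1/n²)` (`abs_moment_ratio_sub_le`).
Consecutive values of the explicit part differ by `c (α+1) / ((n+α+1)(n+α+2)) = O(1/n²)`, hence so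
do consecutive values of `B n / A n`; as these are bounded below by `min M > 0`, the same holds for
their reciprocals.
-/

open MeasureTheory Set

/-- The moment `∫₀¹ r^(2n+1) (1-r²)^α dr`, the reciprocal of the Bergman coefficient `a n`. -/
noncomputable def bergmanMoment (α : ℝ) (n : ℕ) : ℝ :=
  ∫ r in Ioo (0:ℝ) 1, r ^ (2 * n + 1) * (1 - r ^ 2) ^ α

/-- Integrability comes from the factorisation `(1-r²)^α = (1-r)^α (1+r)^α`, whose second factor is
continuous on `[0,1]`. -/
lemma integrableOn_mul_weight {α : ℝ} (hα : -1 < α) {g : ℝ → ℝ}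
    (hg : ContinuousOn g (Icc 0 1)) :
    IntegrableOn (fun r : ℝ => g r * (1 - r ^ 2) ^ α) (Ioo 0 1) := by
  have h1 : IntervalIntegrable (fun r : ℝ => (1 - r) ^ α) volume 0 1 := by
    have := (intervalIntegral.intervalIntegrable_rpow' (a := 0) (b := 1) hα).comp_sub_left 1
    simpa using this.symm
  have h2 : IntegrableOn (fun r : ℝ => (1 - r) ^ α) (Icc 0 1) := by
    rwa [intervalIntegrable_iff_integrableOn_Icc_of_le zero_le_one] at h1
  have h3 : ContinuousOn (fun r : ℝ => g r * (1 + r) ^ α) (Icc 0 1) := by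
    refine hg.mul (ContinuousOn.rpow_const (by fun_prop) ?_)
    intro x hx
    left
    have := hx.1
    positivity
  have h4 := (h2.continuousOn_mul h3 isCompact_Icc).mono_set Ioo_subset_Icc_self
  refine h4.congr_fun ?_ measurableSet_Ioo
  intro r hr
  have e : (1 - r ^ 2 : ℝ) = (1 + r) * (1 - r) := by ring
  simp only
  rw [e, Real.mul_rpow (by linarith [hr.1]) (by linarith [hr.2]), mul_assoc]

lemma bergmanMoment_pos {α : ℝ} (hα : -1 < α) (n : ℕ) : 0 < bergmanMoment α n := by
  have hint := integrableOn_mul_weight hα (g := fun r => r ^ (2 * n + 1)) (by fun_prop)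
  have hpos : ∀ r ∈ Ioo (0:ℝ) 1, 0 < r ^ (2 * n + 1) * (1 - r ^ 2) ^ α := by
    intro r hr
    have h1 : 0 < 1 - r ^ 2 := by nlinarith [hr.1, hr.2]
    have h2 := hr.1
    positivity
  unfold bergmanMoment
  rw [← integral_Ioc_eq_integral_Ioo, ← intervalIntegral.integral_of_le zero_le_one]
  refine intervalIntegral.intervalIntegral_pos_of_pos_on ?_ hpos zero_lt_one
  rwa [intervalIntegrable_iff_integrableOn_Ioo_of_le zero_le_one]

lemma bergmanMoment_succ {α : ℝ} (hα : -1 < α) (n : ℕ) :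
    (n + α + 2) * bergmanMoment α (n + 1) = (n + 1) * bergmanMoment α n := by
  have i0 := integrableOn_mul_weight hα (g := fun r => r ^ (2 * n + 1)) (by fun_prop)
  have i1 := integrableOn_mul_weight hα (g := fun r => r ^ (2 * (n + 1) + 1)) (by fun_prop)
  have hcont : ContinuousOn (fun r : ℝ => r ^ (2 * n + 2) * (1 - r ^ 2) ^ (α + 1))
      (Icc 0 1) := by
    refine ContinuousOn.mul (by fun_prop) (ContinuousOn.rpow_const (by fun_prop) ?_)
    intro x _
    right
    linarith
  -- the derivative, with `(1-r²)^(α+1)` expanded so that only the moments for `α` appear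
  have hderiv : ∀ r ∈ Ioo (0:ℝ) 1,
      HasDerivAt (fun r : ℝ => r ^ (2 * n + 2) * (1 - r ^ 2) ^ (α + 1))
        (2 * (n + 1) * (r ^ (2 * n + 1) * (1 - r ^ 2) ^ α)
          - 2 * (n + α + 2) * (r ^ (2 * (n + 1) + 1) * (1 - r ^ 2) ^ α)) r := by
    intro r hr
    have h1 : 0 < 1 - r ^ 2 := by nlinarith [hr.1, hr.2]
    have d1 : HasDerivAt (fun r : ℝ => 1 - r ^ 2) (-(2 * r)) r := by
      simpa using (hasDerivAt_pow 2 r).const_sub 1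
    have d2 := d1.rpow_const (p := α + 1) (Or.inl h1.ne')
    have d3 := (hasDerivAt_pow (2 * n + 2) r).mul d2
    refine d3.congr_deriv ?_
    have e1 : (1 - r ^ 2) ^ (α + 1) = (1 - r ^ 2) ^ α * (1 - r ^ 2) := by
      rw [Real.rpow_add h1, Real.rpow_one]
    rw [e1, add_sub_cancel_right]
    have e2 : 2 * n + 2 - 1 = 2 * n + 1 := by omega
    rw [e2]
    push_cast
    ring
  have hint : IntegrableOn (fun r : ℝ => 2 * (n + 1) * (r ^ (2 * n + 1) * (1 - r ^ 2) ^ α)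
          - 2 * (n + α + 2) * (r ^ (2 * (n + 1) + 1) * (1 - r ^ 2) ^ α)) (Ioo 0 1) :=
    (i0.const_mul _).sub (i1.const_mul _)
  have key := intervalIntegral.integral_eq_sub_of_hasDerivAt_of_le zero_le_one hcont hderiv
    (by rwa [intervalIntegrable_iff_integrableOn_Ioo_of_le zero_le_one])
  rw [intervalIntegral.integral_of_le zero_le_one, integral_Ioc_eq_integral_Ioo,
    integral_sub (i0.const_mul _) (i1.const_mul _), integral_const_mul, integral_const_mul] at key
  have z : (0:ℝ) ^ (α + 1) = 0 := Real.zero_rpow (by linarith)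
  simp [z] at key
  unfold bergmanMoment
  linarith

/-- Taylor's formula of order two at `r = 1`, in powers of `1 - r²` instead of `1 - r`. -/
lemma exists_taylor_one_sub_sq {M : ℝ → ℝ} (hM : ContDiffOn ℝ 2 M (Icc 0 1)) (hM1 : M 1 = 1) :
    ∃ c K : ℝ, 0 ≤ K ∧ ∀ r ∈ Icc (0:ℝ) 1,
      |M r - 1 - c * (1 - r ^ 2)| ≤ K * (1 - r ^ 2) ^ 2 := by
  have hN : ContDiffOn ℝ (1 + 1) (fun t => M (1 - t)) (Icc 0 1) := by
    have : ContDiffOn ℝ 2 (fun t => M (1 - t)) (Icc 0 1) := by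
      refine hM.comp (by fun_prop) ?_
      intro t ht
      exact ⟨by linarith [ht.2], by linarith [ht.1]⟩
    exact this.of_le (by norm_num)
  obtain ⟨K, hK⟩ := exists_taylor_mean_remainder_bound (n := 1) zero_le_one (by exact_mod_cast hN)
  set d := derivWithin (fun t => M (1 - t)) (Icc 0 1) 0 with hd
  refine ⟨d / 2, |K| + |d| / 2, by positivity, ?_⟩
  intro r hr
  have h := hK (1 - r) ⟨by linarith [hr.2], by linarith [hr.1]⟩
  simp [taylorWithinEval_succ, hM1, ← hd] at h
  -- `1 - r = (1-r²)/2 + (1-r)²/2` converts the linear term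
  have e : M r - 1 - d / 2 * (1 - r ^ 2) = (M r - (1 + (1 - r) * d)) + d / 2 * (1 - r) ^ 2 := by
    ring
  have hs : (1 - r) ^ 2 ≤ (1 - r ^ 2) ^ 2 := by
    have h1 := hr.1
    have h2 := hr.2
    apply pow_le_pow_left₀ (by linarith)
    nlinarith
  rw [e]
  calc _ ≤ |M r - (1 + (1 - r) * d)| + |d / 2 * (1 - r) ^ 2| := abs_add_le _ _
    _ ≤ |K| * (1 - r) ^ 2 + |d| / 2 * (1 - r) ^ 2 := by
      refine add_le_add ((h.trans ?_)) ?_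
      · exact mul_le_mul_of_nonneg_right (le_abs_self K) (by positivity)
      · rw [abs_mul, abs_div, abs_of_nonneg (sq_nonneg (1 - r)), abs_two]
    _ = (|K| + |d| / 2) * (1 - r) ^ 2 := by ring
    _ ≤ _ := mul_le_mul_of_nonneg_left hs (by positivity)

/-- The asymptotic expansion `B n / A n = 1 + c (α+1)/(n+α+2) + O(1/n²)` of the moment ratio. -/
lemma abs_moment_ratio_sub_le {α : ℝ} (hα : -1 < α) {M : ℝ → ℝ}
    (hM : ContinuousOn M (Icc 0 1)) {c K : ℝ}
    (h : ∀ r ∈ Icc (0:ℝ) 1, |M r - 1 - c * (1 - r ^ 2)| ≤ K * (1 - r ^ 2) ^ 2) (n : ℕ) :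
    |(∫ r in Ioo (0:ℝ) 1, r ^ (2 * n + 1) * (M r * (1 - r ^ 2) ^ α)) / bergmanMoment α n
        - 1 - c * (α + 1) / (n + α + 2)|
      ≤ K * ((α + 1) * (α + 2)) / ((n + α + 2) * (n + α + 3)) := by
  have hA := bergmanMoment_pos hα n
  have r0 := bergmanMoment_succ hα n
  have r1 := bergmanMoment_succ hα (n + 1)
  have hn : (0:ℝ) ≤ n := Nat.cast_nonneg n
  have p2 : 0 < n + α + 2 := by linarith
  have p3 : 0 < n + α + 3 := by linarith
  have iM := integrableOn_mul_weight hα (g := fun r => r ^ (2 * n + 1) * M r) (by fun_prop)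
  have i0 := integrableOn_mul_weight hα (g := fun r => r ^ (2 * n + 1)) (by fun_prop)
  have i1 := integrableOn_mul_weight hα (g := fun r => r ^ (2 * (n + 1) + 1)) (by fun_prop)
  have i2 := integrableOn_mul_weight hα (g := fun r => r ^ (2 * (n + 1 + 1) + 1)) (by fun_prop)
  have eB : (∫ r in Ioo (0:ℝ) 1, r ^ (2 * n + 1) * (M r - 1 - c * (1 - r ^ 2)) * (1 - r ^ 2) ^ α)
      = (∫ r in Ioo (0:ℝ) 1, r ^ (2 * n + 1) * (M r * (1 - r ^ 2) ^ α))
        - (1 + c) * bergmanMoment α n + c * bergmanMoment α (n + 1) := by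
    unfold bergmanMoment
    rw [← integral_const_mul, ← integral_const_mul, ← integral_sub, ← integral_add]
    · congr 1
      ext r
      ring
    · exact (iM.congr_fun (fun r _ => by ring) measurableSet_Ioo).sub (i0.const_mul _)
    · exact i1.const_mul _
    · exact iM.congr_fun (fun r _ => by ring) measurableSet_Ioo
    · exact i0.const_mul _
  have iK : IntegrableOn (fun r : ℝ => K * (r ^ (2 * n + 1) * (1 - r ^ 2) ^ α
      - 2 * (r ^ (2 * (n + 1) + 1) * (1 - r ^ 2) ^ α)
      + r ^ (2 * (n + 1 + 1) + 1) * (1 - r ^ 2) ^ α)) (Ioo 0 1) :=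
    ((i0.sub (i1.const_mul 2)).add i2).const_mul K
  have bE : |∫ r in Ioo (0:ℝ) 1, r ^ (2 * n + 1) * (M r - 1 - c * (1 - r ^ 2)) * (1 - r ^ 2) ^ α|
      ≤ K * (bergmanMoment α n - 2 * bergmanMoment α (n + 1) + bergmanMoment α (n + 1 + 1)) := by
    have eK : (∫ r in Ioo (0:ℝ) 1, K * (r ^ (2 * n + 1) * (1 - r ^ 2) ^ α
      - 2 * (r ^ (2 * (n + 1) + 1) * (1 - r ^ 2) ^ α)
      + r ^ (2 * (n + 1 + 1) + 1) * (1 - r ^ 2) ^ α)) =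
      K * (bergmanMoment α n - 2 * bergmanMoment α (n + 1) + bergmanMoment α (n + 1 + 1)) := by
      unfold bergmanMoment
      have i01 : IntegrableOn (fun r : ℝ => r ^ (2 * n + 1) * (1 - r ^ 2) ^ α
          - 2 * (r ^ (2 * (n + 1) + 1) * (1 - r ^ 2) ^ α)) (Ioo 0 1) := i0.sub (i1.const_mul 2)
      rw [integral_const_mul, integral_add i01 i2, integral_sub i0 (i1.const_mul 2), integral_const_mul]
    rw [← eK, ← Real.norm_eq_abs]
    refine norm_integral_le_of_norm_le iK ?_
    refine (ae_restrict_mem measurableSet_Ioo).mono ?_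
    intro r hr
    have h1 : 0 < 1 - r ^ 2 := by nlinarith [hr.1, hr.2]
    have h2 := hr.1
    have hw : 0 ≤ r ^ (2 * n + 1) * (1 - r ^ 2) ^ α := by positivity
    calc ‖r ^ (2 * n + 1) * (M r - 1 - c * (1 - r ^ 2)) * (1 - r ^ 2) ^ α‖
        = |M r - 1 - c * (1 - r ^ 2)| * (r ^ (2 * n + 1) * (1 - r ^ 2) ^ α) := by
          rw [Real.norm_eq_abs, ← abs_of_nonneg hw, ← abs_mul]
          congr 1
          ring
      _ ≤ K * (1 - r ^ 2) ^ 2 * (r ^ (2 * n + 1) * (1 - r ^ 2) ^ α) :=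
          mul_le_mul_of_nonneg_right (h r (Ioo_subset_Icc_self hr)) hw
      _ = _ := by ring
  rw [eB] at bE
  have q1 : bergmanMoment α (n + 1) = (n + 1) / (n + α + 2) * bergmanMoment α n := by
    field_simp
    linarith
  have q2 : bergmanMoment α (n + 1 + 1)
      = (n + 2) / (n + α + 3) * ((n + 1) / (n + α + 2) * bergmanMoment α n) := by
    rw [← q1]
    push_cast at r1
    field_simp
    linarith
  rw [q2, q1] at bE
  set A := bergmanMoment α n
  set B := ∫ r in Ioo (0:ℝ) 1, r ^ (2 * n + 1) * (M r * (1 - r ^ 2) ^ α)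
  have f1 : B - (1 + c) * A + c * ((n + 1) / (n + α + 2) * A)
      = (B / A - 1 - c * (α + 1) / (n + α + 2)) * A := by
    field_simp
    ring
  have f2 : K * (A - 2 * ((n + 1) / (n + α + 2) * A)
        + (n + 2) / (n + α + 3) * ((n + 1) / (n + α + 2) * A))
      = K * ((α + 1) * (α + 2)) / ((n + α + 2) * (n + α + 3)) * A := by
    field_simp
    ring
  rw [f1, f2, abs_mul, abs_of_pos hA] at bE
  exact le_of_mul_le_mul_right bE hA

/-- For `α > -1` and `M : [0,1] → ℝ` of class `C²` with `M > 0` and `M 1 = 1`,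
the ratios of Bergman coefficients satisfy `|b_n/a_n − b_{n−1}/a_{n−1}| ≤ C/n²`. -/
theorem stmt8 (α : ℝ) (hα : -1 < α) (M : ℝ → ℝ)
    (hM : ContDiffOn ℝ 2 M (Set.Icc 0 1))
    (hMpos : ∀ r ∈ Set.Icc (0:ℝ) 1, 0 < M r) (hM1 : M 1 = 1)
    (a b : ℕ → ℝ)
    (ha : ∀ n : ℕ, a n = (∫ r in Set.Ioo (0:ℝ) 1, r ^ (2 * n + 1) * (1 - r ^ 2) ^ α)⁻¹)
    (hb : ∀ n : ℕ, b n = (∫ r in Set.Ioo (0:ℝ) 1, r ^ (2 * n + 1) * (M r * (1 - r ^ 2) ^ α))⁻¹) :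
    ∃ C : ℝ, 0 < C ∧ ∀ n : ℕ, 1 ≤ n →
      |b n / a n - b (n - 1) / a (n - 1)| ≤ C / (n : ℝ) ^ 2 := by
  obtain ⟨c, K, hK0, hK⟩ := exists_taylor_one_sub_sq hM hM1
  have hMc := hM.continuousOn
  obtain ⟨r₀, hr₀, hmin⟩ := isCompact_Icc.exists_isMinOn (nonempty_Icc.2 zero_le_one) hMc
  have hm := hMpos r₀ hr₀
  set m := M r₀
  have hexp := abs_moment_ratio_sub_le hα hMc hK
  -- `x n` is the moment ratio `B n / A n`, the reciprocal of `b n / a n`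
  obtain ⟨x, hx⟩ : ∃ x : ℕ → ℝ, ∀ n, x n =
      (∫ r in Ioo (0:ℝ) 1, r ^ (2 * n + 1) * (M r * (1 - r ^ 2) ^ α)) / bergmanMoment α n :=
    ⟨_, fun _ => rfl⟩
  simp only [← hx] at hexp
  have hba : ∀ n, b n / a n = (x n)⁻¹ := by
    intro n
    rw [ha, hb, hx, bergmanMoment, inv_div, div_inv_eq_mul, div_eq_inv_mul]
  have hxm : ∀ n, m ≤ x n := by
    intro n
    rw [hx, le_div_iff₀ (bergmanMoment_pos hα n), bergmanMoment, ← integral_const_mul]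
    have iM := integrableOn_mul_weight hα (g := fun r => r ^ (2 * n + 1) * M r) (by fun_prop)
    have i0 := integrableOn_mul_weight hα (g := fun r => r ^ (2 * n + 1)) (by fun_prop)
    refine setIntegral_mono_on (i0.const_mul _)
      (iM.congr_fun (fun r _ => by ring) measurableSet_Ioo) measurableSet_Ioo ?_
    intro r hr
    have h1 : 0 < 1 - r ^ 2 := by nlinarith [hr.1, hr.2]
    have h2 := hr.1
    have hw : 0 ≤ r ^ (2 * n + 1) * (1 - r ^ 2) ^ α := by positivity
    have hle : m ≤ M r := hmin (Ioo_subset_Icc_self hr)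
    have := mul_le_mul_of_nonneg_right hle hw
    linarith
  have ha1 : 0 < α + 1 := by linarith
  have ha2 : 0 < α + 2 := by linarith
  set L := K * ((α + 1) * (α + 2)) with hL
  have hL0 : 0 ≤ L := by positivity
  refine ⟨(|c| * (α + 1) + 2 * L + 1) / m ^ 2, by positivity, ?_⟩
  intro n hn
  obtain ⟨k, rfl⟩ : ∃ k, n = k + 1 := ⟨n - 1, by omega⟩
  rw [Nat.add_sub_cancel, hba, hba]
  have e1 := hexp (k + 1)
  have e0 := hexp k
  push_cast at e1 ⊢
  have hk : (0:ℝ) ≤ k := Nat.cast_nonneg k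
  have b1 : L / ((k + 1 + α + 2) * (k + 1 + α + 3)) ≤ L / ((k:ℝ) + 1) ^ 2 := by
    apply div_le_div_of_nonneg_left hL0 (by positivity)
    nlinarith
  have b0 : L / ((k + α + 2) * (k + α + 3)) ≤ L / ((k:ℝ) + 1) ^ 2 := by
    apply div_le_div_of_nonneg_left hL0 (by positivity)
    nlinarith
  have bm : |c * (α + 1) / (k + 1 + α + 2) - c * (α + 1) / (k + α + 2)|
      ≤ |c| * (α + 1) / ((k:ℝ) + 1) ^ 2 := by
    have p2 : 0 < k + α + 2 := by linarith
    have p3 : 0 < k + 1 + α + 2 := by linarith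
    have : c * (α + 1) / (k + 1 + α + 2) - c * (α + 1) / (k + α + 2)
        = -(c * (α + 1) / ((k + 1 + α + 2) * (k + α + 2))) := by
      field_simp
      ring
    rw [this, abs_neg, abs_div, abs_mul, abs_of_pos ha1, abs_of_pos (mul_pos p3 p2)]
    apply div_le_div_of_nonneg_left (by positivity) (by positivity)
    nlinarith
  have hdiff : |x k - x (k + 1)| ≤ (|c| * (α + 1) + 2 * L + 1) / ((k:ℝ) + 1) ^ 2 := by
    have hp : 0 ≤ 1 / ((k:ℝ) + 1) ^ 2 := by positivity
    have : (|c| * (α + 1) + 2 * L + 1) / ((k:ℝ) + 1) ^ 2 = |c| * (α + 1) / ((k:ℝ) + 1) ^ 2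
      + 2 * (L / ((k:ℝ) + 1) ^ 2) + 1 / ((k:ℝ) + 1) ^ 2 := by ring
    rw [this]
    rw [abs_le] at e1 e0 bm ⊢
    constructor <;> linarith [e1.1, e1.2, e0.1, e0.2, bm.1, bm.2]
  have x1 := hxm (k + 1)
  have x0 := hxm k
  have x1p : 0 < x (k + 1) := by linarith
  have x0p : 0 < x k := by linarith
  have hinv : (x (k + 1))⁻¹ - (x k)⁻¹ = (x k - x (k + 1)) / (x (k + 1) * x k) := by
    field_simp
  rw [hinv, abs_div, abs_of_pos (mul_pos x1p x0p), div_right_comm]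
  apply div_le_div₀ (by positivity) hdiff (by positivity)
  nlinarith
end

section
/- Let α > −1 and let M : [0,1] → ℝ be twice continuously differentiable with M(r) > 0 for all r ∈ [0,1] and M(1) = 1. For n ∈ ℕ define a_n = (∫₀¹ r^{2n+1}(1−r²)^α dr)^{−1} and b_n = (∫₀¹ r^{2n+1} M(r)(1−r²)^α dr)^{−1}. Then the sequence (b_n/a_n) is of bounded variation: ∑_{n=1}^∞ |b_n/a_n − b_{n−1}/a_{n−1}| < ∞. -/
/-!
Write `A n` and `B n` for the two moment integrals, so that `b n / a n = A n / B n`. The quotient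
`B n / A n` is the mean of `M` for the probability measure proportional to
`r ^ (2 * n + 1) * (1 - r ^ 2) ^ α` on `(0, 1)`. Passing from `n` to `n + 1` multiplies the density
by the increasing function `r ^ 2`, so by Chebyshev's association inequality the mean of a
nondecreasing function is nondecreasing in `n` (`mom_div_monotone`); it is also bounded by the value
at `1`, and hence of bounded variation (`summable_mom_div`).

A `C²` function on `[0, 1]` is Lipschitz with some constant `K`, so `M` is the difference of the
nondecreasing functions `r ↦ M r + K * r` and `r ↦ K * r`, and `B n / A n` is of bounded variation.
Since `M` is bounded below by a positive constant, so is `B n / A n`, and taking reciprocals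
preserves bounded variation.
-/

open MeasureTheory Set

/-- The `n`-th odd moment `∫₀¹ r ^ (2n+1) F(r) (1 - r²) ^ α dr` of the weight `F(r) (1 - r²) ^ α`. -/
noncomputable def mom (α : ℝ) (F : ℝ → ℝ) (n : ℕ) : ℝ :=
  ∫ r in Ioo (0:ℝ) 1, r ^ (2 * n + 1) * (F r * (1 - r ^ 2) ^ α)

/-- The singularity at `r = 1` is that of `(1 - r) ^ α`, integrable since `α > -1`; the remaining
factor `(1 + r) ^ α` is continuous on `[0, 1]`. -/
lemma integrableOn_weight {α : ℝ} (hα : -1 < α) :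
    IntegrableOn (fun r : ℝ => (1 - r ^ 2) ^ α) (Ioo 0 1) := by
  have h1 : IntervalIntegrable (fun x : ℝ => (1 - x) ^ α) volume 1 0 := by
    simpa using (intervalIntegral.intervalIntegrable_rpow' (a := 0) (b := 1) hα).comp_sub_left 1
  have h2 : IntegrableOn (fun x : ℝ => (1 - x) ^ α) (Ioo 0 1) :=
    (intervalIntegrable_iff_integrableOn_Ioo_of_le zero_le_one).1 h1.symm
  have hc : ContinuousOn (fun x : ℝ => (1 + x) ^ α) (Icc 0 1) := by
    apply ContinuousOn.rpow_const (by fun_prop)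
    intro x hx
    left
    linarith [hx.1]
  have h3 := h2.continuousOn_mul_of_subset hc isCompact_Icc measurableSet_Ioo Ioo_subset_Icc_self
  refine h3.congr_fun (fun x hx => ?_) measurableSet_Ioo
  have hx0 := hx.1
  have hx1 := hx.2
  simp only
  rw [← Real.mul_rpow (by linarith) (by linarith)]
  congr 1
  ring

lemma integrableOn_mom {α : ℝ} (hα : -1 < α) {F : ℝ → ℝ} (hF : ContinuousOn F (Icc 0 1)) (n : ℕ) :
    IntegrableOn (fun r : ℝ => r ^ (2 * n + 1) * (F r * (1 - r ^ 2) ^ α)) (Ioo 0 1) := by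
  have hc : ContinuousOn (fun r : ℝ => r ^ (2 * n + 1) * F r) (Icc 0 1) := by fun_prop
  have h := (integrableOn_weight hα).continuousOn_mul_of_subset hc isCompact_Icc
    measurableSet_Ioo Ioo_subset_Icc_self
  simpa only [mul_assoc] using h

lemma weight_pos {α r : ℝ} (hr : r ∈ Ioo (0:ℝ) 1) : 0 < (1 - r ^ 2) ^ α := by
  apply Real.rpow_pos_of_pos
  nlinarith [hr.1, hr.2]

lemma mom_add {α : ℝ} (hα : -1 < α) {F G : ℝ → ℝ} (hF : ContinuousOn F (Icc 0 1))
    (hG : ContinuousOn G (Icc 0 1)) (n : ℕ) :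
    mom α (fun r => F r + G r) n = mom α F n + mom α G n := by
  unfold mom
  rw [← integral_add (integrableOn_mom hα hF n) (integrableOn_mom hα hG n)]
  congr 1
  ext r
  ring

lemma mom_const_mul (α : ℝ) (c : ℝ) (F : ℝ → ℝ) (n : ℕ) :
    mom α (fun r => c * F r) n = c * mom α F n := by
  unfold mom
  rw [← integral_const_mul]
  congr 1
  ext r
  ring

lemma mom_mono {α : ℝ} (hα : -1 < α) {F G : ℝ → ℝ} (hF : ContinuousOn F (Icc 0 1))
    (hG : ContinuousOn G (Icc 0 1)) (h : ∀ r ∈ Ioo (0:ℝ) 1, F r ≤ G r) (n : ℕ) :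
    mom α F n ≤ mom α G n := by
  refine setIntegral_mono_on (integrableOn_mom hα hF n) (integrableOn_mom hα hG n)
    measurableSet_Ioo fun r hr => ?_
  have := (weight_pos (α := α) hr).le
  have := hr.1.le
  have := h r hr
  gcongr

lemma mom_sq_mul (α : ℝ) (F : ℝ → ℝ) (n : ℕ) :
    mom α (fun r => r ^ 2 * F r) n = mom α F (n + 1) := by
  unfold mom
  congr 1
  ext r
  ring

lemma mom_one_pos {α : ℝ} (hα : -1 < α) (n : ℕ) : 0 < mom α (fun _ => 1) n := by
  have hpos : ∀ r ∈ Ioo (0:ℝ) 1, 0 < r ^ (2 * n + 1) * (1 * (1 - r ^ 2) ^ α) := by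
    intro r hr
    have := weight_pos (α := α) hr
    have := hr.1
    positivity
  unfold mom
  rw [setIntegral_pos_iff_support_of_nonneg_ae
    (ae_restrict_of_forall_mem measurableSet_Ioo fun r hr => (hpos r hr).le)
    (integrableOn_mom hα continuousOn_const n),
    inter_eq_right.2 fun r hr => Function.mem_support.2 (hpos r hr).ne']
  simp

/-- Chebyshev's association inequality: with `m` the mean of `r ^ 2` for the `n`-th measure and
`s = √m`, the product `(F r - F s) * (r ^ 2 - m)` is nonnegative, and integrating it gives the
claim because the term with the constant `F s` integrates to zero. -/
lemma mom_div_monotone {α : ℝ} (hα : -1 < α) {F : ℝ → ℝ} (hF : ContinuousOn F (Icc 0 1))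
    (hmono : MonotoneOn F (Icc 0 1)) :
    Monotone fun n => mom α F n / mom α (fun _ => 1) n := by
  refine monotone_nat_of_le_succ fun n => ?_
  have hA := mom_one_pos hα n
  have hA' := mom_one_pos hα (n + 1)
  have hle : mom α (fun _ => 1) (n + 1) ≤ mom α (fun _ => 1) n := by
    rw [← mom_sq_mul]
    refine mom_mono hα (by fun_prop) (by fun_prop) (fun r hr => ?_) n
    nlinarith [hr.1, hr.2]
  set m : ℝ := mom α (fun _ => 1) (n + 1) / mom α (fun _ => 1) n with hm
  have hm0 : 0 ≤ m := by positivity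
  have hm1 : m ≤ 1 := (div_le_one hA).2 hle
  set s : ℝ := √m
  have hs0 : 0 ≤ s := Real.sqrt_nonneg _
  have hs2 : s ^ 2 = m := Real.sq_sqrt hm0
  have hs : s ∈ Icc (0:ℝ) 1 := ⟨hs0, Real.sqrt_le_one.2 hm1⟩
  have key : mom α (fun r => m * F r + F s * (r ^ 2 * 1)) n
      ≤ mom α (fun r => r ^ 2 * F r + (F s * m) * 1) n := by
    refine mom_mono hα (by fun_prop) (by fun_prop) (fun r hr => ?_) n
    have hr' := Ioo_subset_Icc_self hr
    have : 0 ≤ (F r - F s) * (r ^ 2 - m) := by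
      rw [← hs2]
      rcases le_total r s with h | h
      · have h1 := hmono hr' hs h
        have h2 : r ^ 2 ≤ s ^ 2 := pow_le_pow_left₀ hr'.1 h 2
        exact mul_nonneg_of_nonpos_of_nonpos (by linarith) (by linarith)
      · have h1 := hmono hs hr' h
        have h2 : s ^ 2 ≤ r ^ 2 := pow_le_pow_left₀ hs0 h 2
        exact mul_nonneg (by linarith) (by linarith)
    nlinarith
  rw [mom_add hα (by fun_prop) (by fun_prop), mom_add hα (by fun_prop) (by fun_prop),
    mom_const_mul, mom_const_mul, mom_const_mul, mom_sq_mul, mom_sq_mul] at key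
  have hmA : m * mom α (fun _ => 1) n = mom α (fun _ => 1) (n + 1) := div_mul_cancel₀ _ hA.ne'
  have key2 : m * mom α F n ≤ mom α F (n + 1) := by
    rw [mul_assoc, hmA] at key
    linarith
  rw [div_le_div_iff₀ hA hA', ← hmA]
  nlinarith

lemma summable_mom_div {α : ℝ} (hα : -1 < α) {F : ℝ → ℝ} (hF : ContinuousOn F (Icc 0 1))
    (hmono : MonotoneOn F (Icc 0 1)) :
    Summable fun n => |mom α F (n + 1) / mom α (fun _ => 1) (n + 1)
      - mom α F n / mom α (fun _ => 1) n| := by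
  have hm := mom_div_monotone hα hF hmono
  have hbd : ∀ n, mom α F n / mom α (fun _ => 1) n ≤ F 1 := by
    intro n
    rw [div_le_iff₀ (mom_one_pos hα n), ← mom_const_mul]
    refine mom_mono hα hF (by fun_prop) (fun r hr => ?_) n
    rw [mul_one]
    exact hmono (Ioo_subset_Icc_self hr) (by simp) hr.2.le
  refine summable_of_sum_range_le
    (c := F 1 - mom α F 0 / mom α (fun _ => 1) 0) (fun n => abs_nonneg _) fun n => ?_
  have : ∀ i ∈ Finset.range n, |mom α F (i + 1) / mom α (fun _ => 1) (i + 1)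
      - mom α F i / mom α (fun _ => 1) i| = mom α F (i + 1) / mom α (fun _ => 1) (i + 1)
      - mom α F i / mom α (fun _ => 1) i :=
    fun i _ => abs_of_nonneg (sub_nonneg.2 (hm (Nat.le_succ i)))
  rw [Finset.sum_congr rfl this,
    Finset.sum_range_sub (fun i => mom α F i / mom α (fun _ => 1) i) n]
  linarith [hbd n]

/-- For `α > -1` and `M : [0,1] → ℝ` of class `C²` with `M > 0` and `M 1 = 1`,
the sequence `(b_n/a_n)` of ratios of Bergman coefficients is of bounded variation. -/
theorem stmt9 (α : ℝ) (hα : -1 < α) (M : ℝ → ℝ)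
    (hM : ContDiffOn ℝ 2 M (Set.Icc 0 1))
    (hMpos : ∀ r ∈ Set.Icc (0:ℝ) 1, 0 < M r) (hM1 : M 1 = 1)
    (a b : ℕ → ℝ)
    (ha : ∀ n : ℕ, a n = (∫ r in Set.Ioo (0:ℝ) 1, r ^ (2 * n + 1) * (1 - r ^ 2) ^ α)⁻¹)
    (hb : ∀ n : ℕ, b n = (∫ r in Set.Ioo (0:ℝ) 1, r ^ (2 * n + 1) * (M r * (1 - r ^ 2) ^ α))⁻¹) :
    Summable (fun n : ℕ => |b (n + 1) / a (n + 1) - b n / a n|) := by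
  have hMc : ContinuousOn M (Icc 0 1) := hM.continuousOn
  have ha' : ∀ n, a n = (mom α (fun _ => 1) n)⁻¹ := fun n => by simp [ha, mom]
  have hb' : ∀ n, b n = (mom α M n)⁻¹ := hb
  obtain ⟨K, hK⟩ := hM.exists_lipschitzOnWith (by norm_num) (convex_Icc 0 1) isCompact_Icc
  have hmono1 : MonotoneOn (fun r => M r + K * r) (Icc 0 1) := by
    intro x hx y hy hxy
    have h := hK.dist_le_mul x hx y hy
    rw [Real.dist_eq, Real.dist_eq, abs_sub_comm x y, abs_of_nonneg (sub_nonneg.2 hxy)] at h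
    have := le_abs_self (M x - M y)
    simp only
    linarith
  have hmono2 : MonotoneOn (fun r : ℝ => (K:ℝ) * r) (Icc 0 1) :=
    fun x _ y _ hxy => mul_le_mul_of_nonneg_left hxy K.2
  have hS := (summable_mom_div hα (by fun_prop) hmono1).add
    (summable_mom_div hα (by fun_prop) hmono2)
  obtain ⟨r₀, hr₀, hmin⟩ := isCompact_Icc.exists_isMinOn (nonempty_Icc.2 zero_le_one) hMc
  have hm := hMpos r₀ hr₀
  set m := M r₀
  have hlow : ∀ n, m ≤ mom α M n / mom α (fun _ => 1) n := by
    intro n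
    rw [le_div_iff₀ (mom_one_pos hα n), ← mom_const_mul]
    refine mom_mono hα (by fun_prop) hMc (fun r hr => ?_) n
    rw [mul_one]
    exact hmin (Ioo_subset_Icc_self hr)
  refine Summable.of_nonneg_of_le (fun n => abs_nonneg _) (fun n => ?_) (hS.mul_left (m * m)⁻¹)
  have hinv : ∀ k, b k / a k = (mom α M k / mom α (fun _ => 1) k)⁻¹ := by
    intro k
    rw [ha', hb', inv_div, div_inv_eq_mul, mul_comm, div_eq_mul_inv]
  have hsplit : ∀ k, mom α M k / mom α (fun _ => 1) k
      = mom α (fun r => M r + K * r) k / mom α (fun _ => 1) k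
        - mom α (fun r => (K:ℝ) * r) k / mom α (fun _ => 1) k := by
    intro k
    rw [mom_add hα hMc (by fun_prop)]
    ring
  have htri : |mom α M n / mom α (fun _ => 1) n - mom α M (n + 1) / mom α (fun _ => 1) (n + 1)|
      ≤ |mom α (fun r => M r + K * r) (n + 1) / mom α (fun _ => 1) (n + 1)
          - mom α (fun r => M r + K * r) n / mom α (fun _ => 1) n|
        + |mom α (fun r => (K:ℝ) * r) (n + 1) / mom α (fun _ => 1) (n + 1)
          - mom α (fun r => (K:ℝ) * r) n / mom α (fun _ => 1) n| := by
    rw [hsplit n, hsplit (n + 1), abs_sub_comm, sub_sub_sub_comm]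
    exact abs_sub _ _
  have h0 := hlow n
  have h1 := hlow (n + 1)
  rw [hinv, hinv, inv_sub_inv (by linarith) (by linarith), abs_div, div_eq_inv_mul]
  have hden : m * m ≤ |mom α M (n + 1) / mom α (fun _ => 1) (n + 1)
      * (mom α M n / mom α (fun _ => 1) n)| :=
    (mul_le_mul h1 h0 hm.le (by linarith)).trans (le_abs_self _)
  exact mul_le_mul (inv_anti₀ (by positivity) hden) htri (abs_nonneg _) (by positivity)
end

section
/- Let α > −1 and define a_n = (∫_𝔻 |ζ|^{2n}(1−|ζ|²)^α dA(ζ))^{−1} for n ∈ ℕ. Then for all z, w ∈ 𝔻, the series ∑_{n=0}^∞ a_n (z·conj(w))ⁿ converges and equals ((α+1)/π) · (1 − z·conj(w))^{−(2+α)}, where the complex power is taken with the principal branch (which is well defined since Re(1 − z·conj(w)) > 0). -/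
/-!
In polar coordinates, followed by the substitution `t = r²`, the moments of the weight become
`∫_𝔻 |ζ|^{2n} (1 - |ζ|²)^α dA = π ∫₀¹ tⁿ (1 - t)^α dt = π B(n + 1, α + 1)`
(`bergman_moment_eq_integral`, `bergman_integral_eq_beta`). Since one argument of the Beta function
is a positive integer, it equals `n! / ((α + 1)(α + 2) ⋯ (α + 1 + n))`. Hence `a_n` is
`(α + 1) / π` times the `n`-th coefficient `(α + 2)(α + 3) ⋯ (α + 1 + n) / n!` of the binomial series
of `(1 - x)^{-(2 + α)}`, which converges on the unit disc.
-/

open MeasureTheory Set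

/-- Polar coordinates and the substitution `t = r²`. -/
lemma bergman_moment_eq_integral (α : ℝ) (n : ℕ) :
    ∫ ζ in Metric.ball (0 : ℂ) 1, ‖ζ‖ ^ (2 * n) * (1 - ‖ζ‖ ^ 2) ^ α =
      Real.pi * ∫ t in Ioo (0 : ℝ) 1, t ^ n * (1 - t) ^ α := by
  set g : ℝ → ℝ := (Iio (1 : ℝ)).indicator fun t => t ^ n * (1 - t) ^ α with hg
  have h1 : ∫ ζ in Metric.ball (0 : ℂ) 1, ‖ζ‖ ^ (2 * n) * (1 - ‖ζ‖ ^ 2) ^ α =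
      ∫ ζ : ℂ, g (‖ζ‖ ^ (2 : ℝ)) := by
    rw [← integral_indicator Metric.isOpen_ball.measurableSet]
    congr 1
    ext ζ
    have h : ‖ζ‖ ^ 2 < 1 ↔ ‖ζ‖ < 1 := sq_lt_one_iff₀ (norm_nonneg ζ)
    simp only [hg, indicator, mem_ball_zero_iff, mem_Iio, Real.rpow_ofNat, h, pow_mul]
  have h2 : ∫ y in Ioi (0 : ℝ), g y = ∫ t in Ioo (0 : ℝ) 1, t ^ n * (1 - t) ^ α := by
    rw [hg, setIntegral_indicator measurableSet_Iio, Ioi_inter_Iio]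
  have hvol : (volume : Measure ℂ).real (Metric.ball 0 1) = Real.pi := by
    simp [Measure.real, Complex.volume_ball]
  rw [h1, integral_fun_norm_addHaar volume (fun r : ℝ => g (r ^ (2 : ℝ))), ← h2,
    ← integral_comp_rpow_Ioi_of_pos (g := g) (p := 2) (by norm_num), hvol,
    Complex.finrank_real_complex]
  have h3 : ∫ x in Ioi (0 : ℝ), ((2 : ℝ) * x ^ ((2 : ℝ) - 1)) • g (x ^ (2 : ℝ)) =
      2 * ∫ y in Ioi (0 : ℝ), y ^ (2 - 1) • g (y ^ (2 : ℝ)) := by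
    rw [← integral_const_mul]
    congr 1
    ext x
    norm_num
    ring
  rw [h3]
  simp only [smul_eq_mul, nsmul_eq_mul]
  push_cast
  ring

lemma bergman_integral_eq_beta (α : ℝ) (n : ℕ) :
    ((∫ t in Ioo (0 : ℝ) 1, t ^ n * (1 - t) ^ α : ℝ) : ℂ) =
      Complex.betaIntegral (n + 1) (α + 1) := by
  rw [Complex.betaIntegral, intervalIntegral.integral_of_le zero_le_one,
    integral_Ioc_eq_integral_Ioo, ← integral_complex_ofReal]
  refine setIntegral_congr_fun measurableSet_Ioo fun t ht => ?_
  have h : (0 : ℝ) ≤ 1 - t := by linarith [ht.2]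
  simp only [add_sub_cancel_right, Complex.cpow_natCast, Complex.ofReal_mul, Complex.ofReal_pow,
    Complex.ofReal_cpow h, Complex.ofReal_sub, Complex.ofReal_one]

lemma ascPochhammer_smeval_eq_prod (x : ℂ) (n : ℕ) :
    (ascPochhammer ℕ n).smeval x = ∏ j ∈ Finset.range n, (x + j) := by
  rw [Polynomial.ascPochhammer_smeval_eq_eval]
  induction n with
  | zero => simp
  | succ n ih => rw [ascPochhammer_succ_eval, ih, Finset.prod_range_succ]

lemma bergman_coeff (α : ℝ) (hα : -1 < α) (n : ℕ) :
    (((∫ ζ in Metric.ball (0 : ℂ) 1, ‖ζ‖ ^ (2 * n) * (1 - ‖ζ‖ ^ 2) ^ α)⁻¹ : ℝ) : ℂ) =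
      (((α + 1) / Real.pi : ℝ) : ℂ) * Ring.choose (((2 + α : ℝ) : ℂ) + n - 1) n := by
  have hre : 0 < ((α : ℂ) + 1).re := by simp; linarith
  have hfac : (n.factorial : ℂ) ≠ 0 := by exact_mod_cast n.factorial_ne_zero
  have hchoose := Ring.factorial_nsmul_multichoose_eq_ascPochhammer (((2 + α : ℝ) : ℂ)) n
  rw [Ring.multichoose_eq, ascPochhammer_smeval_eq_prod, nsmul_eq_mul] at hchoose
  have hprod : ∏ j ∈ Finset.range (n + 1), ((α : ℂ) + 1 + j) =
      (∏ j ∈ Finset.range n, (((2 + α : ℝ) : ℂ) + j)) * (α + 1) := by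
    rw [Finset.prod_range_succ']
    congr 1
    · refine Finset.prod_congr rfl fun j _ => ?_
      push_cast
      ring
    · simp
  rw [bergman_moment_eq_integral, Complex.ofReal_inv, Complex.ofReal_mul,
    bergman_integral_eq_beta, Complex.betaIntegral_symm,
    Complex.betaIntegral_eval_nat_add_one_right hre, hprod, ← hchoose, mul_inv, inv_div]
  push_cast
  field_simp

/-- For `α > -1` and `z, w` in the unit disc, the Bergman kernel series
`∑ a_n (z·conj w)ⁿ` converges to `((α+1)/π)·(1 − z·conj w)^{−(2+α)}` (principal branch). -/
theorem stmt14 (α : ℝ) (hα : -1 < α) (a : ℕ → ℝ)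
    (ha : ∀ n : ℕ,
      a n = (∫ ζ in Metric.ball (0:ℂ) 1, ‖ζ‖ ^ (2 * n) * (1 - ‖ζ‖ ^ 2) ^ α)⁻¹)
    (z w : ℂ) (hz : z ∈ Metric.ball (0:ℂ) 1) (hw : w ∈ Metric.ball (0:ℂ) 1) :
    HasSum (fun n : ℕ => (a n : ℂ) * (z * (starRingEnd ℂ) w) ^ n)
      ((((α + 1) / Real.pi : ℝ) : ℂ) *
        (1 - z * (starRingEnd ℂ) w) ^ (((-(2 + α) : ℝ)) : ℂ)) := by
  rw [mem_ball_zero_iff] at hz hw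
  have hx : ‖z * (starRingEnd ℂ) w‖ < 1 := by
    rw [norm_mul, RCLike.norm_conj]
    exact mul_lt_one_of_nonneg_of_lt_one_left (norm_nonneg z) hz hw.le
  generalize z * (starRingEnd ℂ) w = x at hx
  have hs := (Complex.one_div_one_sub_cpow_hasFPowerSeriesOnBall_zero ((2 + α : ℝ) : ℂ)).hasSum
    (y := x) (by simpa [enorm_eq_nnnorm, ← NNReal.coe_lt_coe] using hx)
  rw [Complex.ofReal_neg, Complex.cpow_neg]
  simp only [zero_add, one_div, FormalMultilinearSeries.ofScalars_apply_eq, smul_eq_mul] at hs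
  have hterm : (fun n : ℕ => (a n : ℂ) * x ^ n) = fun n : ℕ =>
      (((α + 1) / Real.pi : ℝ) : ℂ) * (Ring.choose (((2 + α : ℝ) : ℂ) + n - 1) n * x ^ n) := by
    ext n
    rw [ha, bergman_coeff α hα, mul_assoc]
  rw [hterm]
  exact hs.mul_left _
end
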